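/- arXiv:2604.07718 — 7 statements merged into one kernel-verified Lean document; each statement's English description precedes it below -/
import Mathlib

section
/- Let k, ℓ ≥ 1, let g : ℝ^k → ℝ^ℓ be locally Lipschitz, and let B ∈ ℝ^{ℓ×k}. If for Lebesgue-almost every x ∈ ℝ^k, g is differentiable at x with Dg(x) = B, then there exists a ∈ ℝ^ℓ such that g(x) = a + Bx for all x ∈ ℝ^k. -/
open MeasureTheory Matrix

noncomputable section

/-- `E n` is Euclidean space `ℝ^n`. -/
abbrev E (n : ℕ) : Type := EuclideanSpace ℝ (Fin n)

/-- Action of a matrix on a Euclidean vector. -/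
def mulVecE {m n : ℕ} (A : Matrix (Fin m) (Fin n) ℝ) (x : E n) : E m := WithLp.toLp 2 (A.mulVec x)

/-- **Lemma `lem:lipschitz` (3)**: a locally Lipschitz map whose Jacobian equals the constant
matrix `B` almost everywhere is affine, `g(x) = a + Bx`. -/
theorem locally_lipschitz_ae_constant_deriv_affine
    (k l : ℕ) (hk : 1 ≤ k) (hl : 1 ≤ l)
    (g : E k → E l) (hg : LocallyLipschitz g)
    (B : Matrix (Fin l) (Fin k) ℝ)
    (hB : ∀ᵐ x : E k, DifferentiableAt ℝ g x ∧ ∀ v : E k, fderiv ℝ g x v = mulVecE B v) :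
    ∃ a : E l, ∀ x : E k, g x = a + mulVecE B x := by
  have key : ∀ v : E k, ∀ᵐ x : E k, g (x + v) = g x + mulVecE B v := by
    intro v
    let L : ℝ →L[ℝ] E k := ContinuousLinearMap.smulRight (1 : ℝ →L[ℝ] ℝ) v
    obtain ⟨s, hs, hsm, hsP⟩ := Filter.Eventually.exists_measurable_mem hB
    have h1 := (ae_ae_add_linearMap_mem_iff L.toLinearMap (volume : Measure ℝ)
      (volume : Measure (E k)) hsm).2 hs
    filter_upwards [h1] with x hx
    set w := mulVecE B v with hw
    have hl1 : LocallyLipschitz (fun t : ℝ => g (x + t • v)) :=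
      hg.comp (((LipschitzWith.const x).add L.lipschitz).locallyLipschitz)
    have hl2 : LipschitzWith _ (fun t : ℝ => t • w) :=
      (ContinuousLinearMap.smulRight (1 : ℝ →L[ℝ] ℝ) w).lipschitz
    obtain ⟨K, hK⟩ := (hl1.locallyLipschitzOn
      (s := Set.uIcc (0:ℝ) 1)).exists_lipschitzOnWith_of_compact isCompact_uIcc
    have hac := hK.absolutelyContinuousOnInterval.sub
      (hl2.lipschitzOnWith (s := Set.uIcc (0:ℝ) 1)).absolutelyContinuousOnInterval
    obtain ⟨C, hC⟩ := hac.const_of_ae_hasDerivAt_zero (by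
      filter_upwards [hx] with t ht _
      obtain ⟨hd, hv⟩ := hsP _ ht
      have hd' : HasFDerivAt g (fderiv ℝ g (x + t • v)) (x + t • v) := hd.hasFDerivAt
      have h2 : HasDerivAt (fun t : ℝ => x + t • v) v t := by
        simpa using ((hasDerivAt_id t).smul_const v).const_add x
      have h3 := hd'.comp_hasDerivAt t h2
      have h4 : HasDerivAt (fun t : ℝ => t • w) w t := by
        simpa using (hasDerivAt_id t).smul_const w
      have hv' : fderiv ℝ g (x + t • v) v = w := hv v
      rw [hv'] at h3
      have h5 := h3.sub h4
      rw [sub_self] at h5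
      exact h5)
    have e0 := hC 0 (by simp)
    have e1 := hC 1 (by simp)
    have e := e1.trans e0.symm
    simp at e
    exact sub_eq_iff_eq_add.1 e
  refine ⟨g 0, fun x => ?_⟩
  have hc := hg.continuous
  have h := Continuous.ae_eq_iff_eq (volume : Measure (E k))
    (f := fun y => g (y + x)) (g := fun y => g y + mulVecE B x)
    (by fun_prop) (by fun_prop) |>.1 (key x)
  simpa using congrFun h 0
end
end

section
/- Let k ≥ 2 and let g : ℝ^k → ℝ^k be locally Lipschitz. If for Lebesgue-almost every x ∈ ℝ^k, g is differentiable at x with Dg(x) ∈ SO(k), then there exist a ∈ ℝ^k and Q ∈ SO(k) such that g(x) = a + Qx for all x ∈ ℝ^k. -/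
open MeasureTheory Matrix

noncomputable section

open Set Filter Topology

theorem lip_null {k : ℕ} {K : NNReal} {f : E k → E k} (hf : LipschitzWith K f) {s : Set (E k)}
    (hs : volume s = 0) : volume (f '' s) = 0 := by
  have inst : (Measure.hausdorffMeasure (k : ℝ) : Measure (E k)).IsAddHaarMeasure := by
    simpa using MeasureTheory.isAddHaarMeasure_hausdorffMeasure (E := EuclideanSpace ℝ (Fin k))
  have h1 : (volume : Measure (E k)) ≪ (Measure.hausdorffMeasure (k : ℝ) : Measure (E k)) :=
    Measure.absolutelyContinuous_isAddHaarMeasure _ _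
  have h2 : (Measure.hausdorffMeasure (k : ℝ) : Measure (E k)) ≪ (volume : Measure (E k)) :=
    Measure.absolutelyContinuous_isAddHaarMeasure _ _
  apply h1
  have h3 := hf.hausdorffMeasure_image_le (d := (k : ℝ)) (by positivity) s
  rw [h2 hs, mul_zero] at h3
  exact le_antisymm h3 bot_le

theorem det_pos_of_norm_lt {k : ℕ} (A : E k →L[ℝ] E k) {s : ℝ} (hs : ‖A‖ < s) :
    0 < (A + s • ContinuousLinearMap.id ℝ (E k)).det := by
  have hs0 : 0 < s := (norm_nonneg _).trans_lt hs
  let F : ℝ → ℝ := fun t => (t • A + s • ContinuousLinearMap.id ℝ (E k)).det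
  have hF : Continuous F := ContinuousLinearMap.continuous_det.comp (by fun_prop)
  have hne : ∀ t ∈ Icc (0 : ℝ) 1, F t ≠ 0 := by
    intro t ht h0
    have := LinearMap.bot_lt_ker_of_det_eq_zero (f := ((t • A + s • ContinuousLinearMap.id ℝ (E k) : E k →L[ℝ] E k) : E k →ₗ[ℝ] E k)) h0
    obtain ⟨x, hx, hx0⟩ := Submodule.exists_mem_ne_zero_of_ne_bot this.ne'
    have hx' : t • A x + s • x = 0 := by simpa using hx
    have h1 : ‖s • x‖ = ‖t • A x‖ := by
      rw [← norm_neg, neg_eq_of_add_eq_zero_left hx']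
    rw [norm_smul, norm_smul, Real.norm_of_nonneg hs0.le, Real.norm_of_nonneg ht.1] at h1
    have h2 := A.le_opNorm x
    have h3 : 0 < ‖x‖ := norm_pos_iff.2 hx0
    have h4 : t * ‖A x‖ ≤ ‖A x‖ := mul_le_of_le_one_left (norm_nonneg _) ht.2
    nlinarith
  have h0 : 0 < F 0 := by
    have e : (0 : ℝ) • A + s • ContinuousLinearMap.id ℝ (E k) = s • ContinuousLinearMap.id ℝ (E k) := by
      ext x; simp
    simp only [F]
    rw [e]
    have : (s • ContinuousLinearMap.id ℝ (E k)).det = s ^ k := by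
      simp [ContinuousLinearMap.det]
    rw [this]; positivity
  by_contra hcon
  have h1 : F 1 ≤ 0 := by simpa [F] using hcon
  obtain ⟨t, ht, h⟩ := intermediate_value_Icc' (zero_le_one) hF.continuousOn ⟨h1, h0.le⟩
  exact hne t ht h

theorem interp_det (k : ℕ) (c : ℝ) : ∃ l : Fin (k+1) → ℝ, ∀ A : E k →L[ℝ] E k,
    A.det = ∑ j : Fin (k+1), l j * (A + (c + (j : ℕ)) • ContinuousLinearMap.id ℝ (E k)).det := by
  classical
  let v : Fin (k+1) → ℝ := fun j => c + (j : ℕ)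
  have hv : Set.InjOn v (Finset.univ : Finset (Fin (k+1))) := by
    intro a _ b _ h
    have : (a : ℕ) = (b : ℕ) := by simpa [v] using h
    exact Fin.ext this
  refine ⟨fun j => (Lagrange.basis Finset.univ v j).eval 0, fun A => ?_⟩
  let b := (EuclideanSpace.basisFun (Fin k) ℝ).toBasis
  let M := LinearMap.toMatrix b b (A : E k →ₗ[ℝ] E k)
  let p : Polynomial ℝ := Matrix.det ((Polynomial.X : Polynomial ℝ) • (1 : Matrix (Fin k) (Fin k) ℝ).map Polynomial.C + M.map Polynomial.C)
  have hp : ∀ s : ℝ, p.eval s = (A + s • ContinuousLinearMap.id ℝ (E k)).det := by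
    intro s
    have h1 : (A + s • ContinuousLinearMap.id ℝ (E k)).det = Matrix.det (M + s • 1) := by
      rw [ContinuousLinearMap.det, ← LinearMap.det_toMatrix b]
      congr 1
      simp [M]
    rw [h1]
    simp only [p]
    rw [← Polynomial.coe_evalRingHom, RingHom.map_det]
    congr 1
    ext i j
    by_cases hij : i = j
    · subst hij; simp; ring
    · simp [Matrix.one_apply, hij]
  have hdeg : p.degree < (Finset.univ : Finset (Fin (k+1))).card := by
    have h := Polynomial.natDegree_det_X_add_C_le (1 : Matrix (Fin k) (Fin k) ℝ) M
    refine lt_of_le_of_lt Polynomial.degree_le_natDegree ?_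
    simp only [Finset.card_univ, Fintype.card_fin] at h ⊢
    exact_mod_cast Nat.lt_succ_of_le h
  have h := Lagrange.eq_interpolate_of_eval_eq (fun j => p.eval (v j)) hv hdeg (fun _ _ => rfl)
  have h0 := congrArg (Polynomial.eval 0) h
  rw [hp 0, Lagrange.interpolate_apply, Polynomial.eval_finsetSum] at h0
  have e : A + (0 : ℝ) • ContinuousLinearMap.id ℝ (E k) = A := by
    ext x; simp
  rw [e] at h0
  rw [h0]
  refine Finset.sum_congr rfl fun j _ => ?_
  rw [Polynomial.eval_mul, Polynomial.eval_C, hp, mul_comm]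

def Rot {k : ℕ} (A : E k →L[ℝ] E k) : Prop :=
  ∃ R : Matrix (Fin k) (Fin k) ℝ, R * Rᵀ = 1 ∧ R.det = 1 ∧ ∀ v : E k, A v = mulVecE R v

theorem rot_det {k : ℕ} {A : E k →L[ℝ] E k} (h : Rot A) : A.det = 1 := by
  obtain ⟨R, h1, h2, h3⟩ := h
  have : (A : E k →ₗ[ℝ] E k) = Matrix.toLpLin 2 2 R := by
    ext v i; simp [h3, mulVecE]
  rw [ContinuousLinearMap.det, this, LinearMap.det_toLpLin, h2]

theorem rot_adj {k : ℕ} {A : E k →L[ℝ] E k} (h : Rot A) :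
    ∃ B : E k → E k, (∀ v, A (B v) = v) ∧ ∀ v, ‖A v‖ = ‖v‖ := by
  obtain ⟨R, h1, h2, h3⟩ := h
  have h1' : Rᵀ * R = 1 := mul_eq_one_comm.1 h1
  refine ⟨fun v => mulVecE Rᵀ v, fun v => ?_, fun v => ?_⟩
  · rw [h3]; simp [mulVecE, Matrix.mulVec_mulVec, h1]
  · rw [h3]
    have : ‖mulVecE R v‖ ^ 2 = ‖v‖ ^ 2 := by
      rw [EuclideanSpace.real_norm_sq_eq, EuclideanSpace.real_norm_sq_eq]
      have e : ∀ w : Fin k → ℝ, ∑ i, w i ^ 2 = w ⬝ᵥ w := by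
        intro w; simp [dotProduct, sq]
      rw [e, e]
      simp only [mulVecE]
      rw [Matrix.dotProduct_mulVec, Matrix.vecMul_mulVec]
      simp [h1', Matrix.vecMul_one]
    exact (sq_eq_sq₀ (norm_nonneg _) (norm_nonneg _)).1 this

theorem rot_norm {k : ℕ} {A : E k →L[ℝ] E k} (h : Rot A) : ‖A‖ ≤ 1 := by
  obtain ⟨B, -, hB⟩ := rot_adj h
  exact A.opNorm_le_bound zero_le_one fun v => by rw [hB, one_mul]

theorem rot_det_add {k : ℕ} {A : E k →L[ℝ] E k} (h : Rot A) (p v : E k) :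
    (A + (innerSL ℝ p).smulRight v).det = 1 + inner ℝ (A p) v := by
  obtain ⟨B, hB, hn⟩ := rot_adj h
  have hin : ∀ x y, inner ℝ (A x) (A y) = inner ℝ x y :=
    fun x y => (LinearIsometry.inner_map_map ⟨(A : E k →ₗ[ℝ] E k), hn⟩ x y)
  have e : ((A + (innerSL ℝ p).smulRight v : E k →L[ℝ] E k) : E k →ₗ[ℝ] E k) =
      (A : E k →ₗ[ℝ] E k) ∘ₗ LinearMap.transvection ((innerSL ℝ p : E k →L[ℝ] ℝ) : E k →ₗ[ℝ] ℝ) (B v) := by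
    ext1 x
    simp [LinearMap.transvection.apply, hB]
  have hd : LinearMap.det (A : E k →ₗ[ℝ] E k) = 1 := rot_det h
  rw [ContinuousLinearMap.det, e, LinearMap.det_comp, hd, one_mul, LinearMap.transvection.det]
  have : inner ℝ (A p) v = inner ℝ p (B v) := by
    conv_lhs => rw [← hB v]
    rw [hin]
  simp [this]

theorem bij_add {k : ℕ} {c : NNReal} {h : E k → E k} (hh : LipschitzWith c h) {s : ℝ}
    (hs : (c : ℝ) < s) : Function.Bijective (fun y => h y + s • y) := by
  have hs0 : 0 < s := c.2.trans_lt hs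
  let e : E k ≃L[ℝ] E k := ContinuousLinearEquiv.smulLeft (Units.mk0 s hs0.ne')
  have hap : ApproximatesLinearOn (fun y => h y + s • y) (e : E k →L[ℝ] E k) univ c := by
    intro x _ y _
    have e1 : h x + s • x - (h y + s • y) - (e : E k →L[ℝ] E k) (x - y) = h x - h y := by
      have : (e : E k →L[ℝ] E k) (x - y) = s • (x - y) := rfl
      rw [this, smul_sub]; abel
    rw [e1]
    exact hh.norm_sub_le x y
  have hc : Subsingleton (E k) ∨ c < ‖(e.symm : E k →L[ℝ] E k)‖₊⁻¹ := by
    rcases subsingleton_or_nontrivial (E k) with h | h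
    · exact Or.inl h
    · right
      have h1 : ‖(e.symm : E k →L[ℝ] E k)‖ ≤ s⁻¹ := by
        refine ContinuousLinearMap.opNorm_le_bound _ (by positivity) fun x => ?_
        have : (e.symm : E k →L[ℝ] E k) x = s⁻¹ • x := rfl
        rw [this, norm_smul, Real.norm_of_nonneg (by positivity)]
      have h2 : 0 < ‖(e.symm : E k →L[ℝ] E k)‖ := e.norm_symm_pos
      rw [← NNReal.coe_lt_coe]
      push_cast
      refine hs.trans_le ?_
      rw [le_inv_comm₀ hs0 h2]
      exact h1
  refine ⟨fun x y hxy => ?_, hap.surjective hc⟩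
  exact hap.injOn hc (mem_univ x) (mem_univ y) hxy

theorem cov {k : ℕ} {c : NNReal} {h : E k → E k} (hh : LipschitzWith c h)
    (hi : Function.Injective h) {S B : Set (E k)} (hS : MeasurableSet S) (hSB : S ⊆ B)
    (h0 : volume (B \ S) = 0) (f' : E k → E k →L[ℝ] E k) (hf : ∀ x ∈ S, HasFDerivAt h (f' x) x) :
    ∫ x in S, |(f' x).det| = volume.real (h '' B) := by
  have h1 := integral_image_eq_integral_abs_det_fderiv_smul volume hS
    (fun x hx => (hf x hx).hasFDerivWithinAt) hi.injOn (fun _ => (1 : ℝ))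
  simp only [smul_eq_mul, mul_one] at h1
  rw [← h1]
  simp only [integral_const, smul_eq_mul, mul_one, measureReal_restrict_apply_univ]
  have : h '' B = h '' S ∪ h '' (B \ S) := by
    rw [← image_union, union_diff_cancel hSB]
  simp only [measureReal_def]
  rw [this]
  congr 1
  refine le_antisymm (measure_mono subset_union_left) ((measure_union_le _ _).trans ?_)
  rw [lip_null hh h0, add_zero]

def wt {k : ℕ} (y : E k) : ℝ := max (1 - ‖y‖ ^ 2) 0

theorem wt_nonneg {k : ℕ} (y : E k) : 0 ≤ wt y := le_max_right _ _

theorem wt_le_one {k : ℕ} (y : E k) : wt y ≤ 1 := by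
  unfold wt
  exact max_le (by nlinarith [sq_nonneg ‖y‖]) zero_le_one

theorem wt_zero {k : ℕ} {y : E k} (h : 1 ≤ ‖y‖) : wt y = 0 := by
  unfold wt
  exact max_eq_right (by nlinarith)

theorem wt_in {k : ℕ} {y : E k} (h : ‖y‖ ≤ 1) : wt y = 1 - ‖y‖ ^ 2 := by
  unfold wt
  exact max_eq_left (by nlinarith [norm_nonneg y])

theorem wt_sub_le {k : ℕ} (x y : E k) : wt x - wt y ≤ 2 * ‖x - y‖ := by
  have hy := wt_nonneg y
  have hn := norm_nonneg (x - y)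
  have hxy : ‖y‖ - ‖x‖ ≤ ‖x - y‖ := by
    rw [norm_sub_rev]; exact norm_sub_norm_le y x
  rcases le_total 1 ‖x‖ with h | h
  · rw [wt_zero h]; linarith
  · rw [wt_in h]
    have hx := norm_nonneg x
    rcases le_total 1 ‖y‖ with h' | h'
    · rw [wt_zero h']; nlinarith
    · rw [wt_in h']
      have hy := norm_nonneg y
      rcases le_total ‖x‖ ‖y‖ with h2 | h2 <;> nlinarith

theorem wt_abs {k : ℕ} (x y : E k) : |wt x - wt y| ≤ 2 * ‖x - y‖ := by
  refine abs_le.2 ⟨?_, wt_sub_le x y⟩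
  have := wt_sub_le y x
  rw [norm_sub_rev] at this
  linarith

theorem wt_cont {k : ℕ} : Continuous (wt : E k → ℝ) := by
  unfold wt; fun_prop

theorem wt_compact {k : ℕ} : HasCompactSupport (wt : E k → ℝ) := by
  refine HasCompactSupport.intro (isCompact_closedBall (0 : E k) 1) fun x hx => wt_zero ?_
  simp at hx; exact hx.le

theorem wt_int {k : ℕ} : Integrable (wt : E k → ℝ) :=
  wt_cont.integrable_of_hasCompactSupport wt_compact

theorem wt_int_pos {k : ℕ} : 0 < ∫ y : E k, wt y := by
  refine wt_cont.integral_pos_of_hasCompactSupport_nonneg_nonzero wt_compact wt_nonneg (x := 0) ?_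
  simp [wt]

theorem wt_mul_norm {k : ℕ} (y : E k) : wt y * ‖y‖ ≤ wt y := by
  rcases le_total 1 ‖y‖ with h | h
  · rw [wt_zero h]; simp
  · exact mul_le_of_le_one_right (wt_nonneg y) h

theorem fderiv_lip {k : ℕ} {g : E k → E k} (hg : LipschitzWith 1 g) (x : E k) :
    ‖fderiv ℝ g x‖ ≤ 1 := by
  simpa using norm_fderiv_le_of_lipschitz ℝ hg (x₀ := x)

theorem meas_fd {k : ℕ} (g : E k → E k) : Measurable fun y => fderiv ℝ g y y :=
  isBoundedBilinearMap_apply.continuous.measurable.comp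
    ((measurable_fderiv ℝ g).prodMk measurable_id)

theorem det_integrable {k : ℕ} {S : Set (E k)} (hS : volume S < ⊤) {A : E k → E k →L[ℝ] E k}
    (hA : Measurable A) {C : ℝ} (hC : ∀ y, ‖A y‖ ≤ C) :
    IntegrableOn (fun y => (A y).det) S := by
  obtain ⟨D, hD⟩ := (isCompact_closedBall (0 : E k →L[ℝ] E k) C).exists_bound_of_continuousOn
    (ContinuousLinearMap.continuous_det (𝕜 := ℝ) (E := E k)).continuousOn
  refine IntegrableOn.of_bound hS
    ((ContinuousLinearMap.continuous_det.measurable.comp hA).aestronglyMeasurable) D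
    (Eventually.of_forall fun y => hD _ ?_)
  simpa using hC y

theorem psi_deriv {k : ℕ} {y : E k} (hy : ‖y‖ < 1) :
    HasFDerivAt (fun z : E k => wt z ^ 2) (innerSL ℝ ((-4 * wt y) • y)) y := by
  have h1 : HasFDerivAt (fun z : E k => (1 - ‖z‖ ^ 2) ^ 2)
      (innerSL ℝ ((-4 * wt y) • y)) y := by
    have h2 := ((hasStrictFDerivAt_norm_sq (F := E k) y).hasFDerivAt.const_sub 1).pow 2
    refine h2.congr_fderiv ?_
    refine ContinuousLinearMap.ext fun z => ?_
    rw [wt_in hy.le]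
    simp [inner_smul_left]
    ring
  refine h1.congr_of_eventuallyEq ?_
  have : Metric.ball (0 : E k) 1 ∈ 𝓝 y := Metric.isOpen_ball.mem_nhds (by simpa using hy)
  filter_upwards [this] with z hz
  have hz' : ‖z‖ < 1 := by simpa using hz
  rw [wt_in hz'.le]

theorem psi_lip {k : ℕ} (v : E k) : LipschitzWith (4 * ‖v‖₊) (fun z : E k => wt z ^ 2 • v) := by
  refine LipschitzWith.of_dist_le_mul fun x y => ?_
  rw [dist_eq_norm, ← sub_smul, norm_smul, dist_eq_norm]
  have h : ‖wt x ^ 2 - wt y ^ 2‖ ≤ 4 * ‖x - y‖ := by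
    have e : wt x ^ 2 - wt y ^ 2 = (wt x + wt y) * (wt x - wt y) := by ring
    rw [e, Real.norm_eq_abs, abs_mul]
    have h1 := wt_abs x y
    have h2 : |wt x + wt y| ≤ 2 := by
      rw [abs_of_nonneg (add_nonneg (wt_nonneg x) (wt_nonneg y))]
      linarith [wt_le_one x, wt_le_one y]
    have := mul_le_mul h2 h1 (abs_nonneg _) (by norm_num)
    linarith
  push_cast
  have := mul_le_mul_of_nonneg_right h (norm_nonneg v)
  linarith

theorem keyN {k : ℕ} {g : E k → E k} (hg : LipschitzWith 1 g)
    (hQ : ∀ᵐ x : E k, DifferentiableAt ℝ g x ∧ Rot (fderiv ℝ g x)) :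
    ∫ y : E k, wt y • fderiv ℝ g y y = 0 := by
  have hfd := fderiv_lip hg
  have hint : Integrable (fun y : E k => wt y • fderiv ℝ g y y) := by
    refine wt_int.mono' (wt_cont.measurable.smul (meas_fd g)).aestronglyMeasurable
      (Eventually.of_forall fun y => ?_)
    rw [norm_smul, Real.norm_of_nonneg (wt_nonneg y)]
    have h1 : ‖fderiv ℝ g y y‖ ≤ ‖y‖ := by
      simpa using (fderiv ℝ g y).le_of_opNorm_le (hfd y) y
    exact (mul_le_mul_of_nonneg_left h1 (wt_nonneg y)).trans (wt_mul_norm y)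
  refine ext_inner_left ℝ fun v => ?_
  rw [inner_zero_right, ← integral_inner hint v]
  set B : Set (E k) := Metric.ball 0 1 with hB
  set S : Set (E k) := B ∩ {x | DifferentiableAt ℝ g x} with hSdef
  have hS : MeasurableSet S := Metric.isOpen_ball.measurableSet.inter (measurableSet_of_differentiableAt ℝ g)
  have hSB : S ⊆ B := inter_subset_left
  have h0 : volume (B \ S) = 0 := by
    refine measure_mono_null ?_ (ae_iff.1 hQ)
    rintro x ⟨hx, hxS⟩ h
    exact hxS ⟨hx, h.1⟩
  have hSfin : volume S < ⊤ := (measure_mono hSB).trans_lt measure_ball_lt_top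
  let P : E k → E k →L[ℝ] E k := fun y => (innerSL ℝ ((-4 * wt y) • y)).smulRight v
  have hPm : Continuous P := by
    have := wt_cont (k := k)
    have h1 : Continuous fun y : E k => innerSL ℝ ((-4 * wt y) • y) := by fun_prop
    exact ((ContinuousLinearMap.smulRightL ℝ (E k) (E k)).flip v).continuous.comp h1
  have hPn : ∀ y, ‖P y‖ ≤ 4 * ‖v‖ := by
    intro y
    simp only [P, ContinuousLinearMap.norm_smulRight_apply, innerSL_apply_norm]
    gcongr
    rw [norm_smul, norm_mul, Real.norm_of_nonneg (wt_nonneg y)]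
    norm_num
    linarith [wt_mul_norm y, wt_le_one y]
  set c : ℝ := 2 + 4 * ‖v‖ with hc
  obtain ⟨l, hl⟩ := interp_det k c
  have hid : ∀ s : ℝ, 0 ≤ s → ‖s • ContinuousLinearMap.id ℝ (E k)‖ ≤ s := by
    intro s hs
    rw [norm_smul, Real.norm_of_nonneg hs]
    exact mul_le_of_le_one_right hs ContinuousLinearMap.norm_id_le
  have hc0 : 0 ≤ c := by positivity
  have hI : ∀ A : E k → E k →L[ℝ] E k, Measurable A → (∀ y, ‖A y‖ ≤ 1 + 4 * ‖v‖) →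
      ∫ y in S, (A y).det = ∑ j : Fin (k+1), l j *
        ∫ y in S, (A y + (c + (j : ℕ)) • ContinuousLinearMap.id ℝ (E k)).det := by
    intro A hA hAn
    rw [setIntegral_congr_fun hS (fun y _ => hl (A y)), integral_finset_sum]
    · simp_rw [integral_const_mul]
    · intro j _
      refine Integrable.const_mul ?_ _
      refine det_integrable hSfin (hA.add_const _) (C := 1 + 4 * ‖v‖ + (c + (j : ℕ))) fun y => ?_
      exact (norm_add_le _ _).trans (add_le_add (hAn y) (hid _ (by positivity)))
  have hA0 : Measurable (fderiv ℝ g) := measurable_fderiv ℝ g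
  have hA1 : Measurable fun y => fderiv ℝ g y + P y := hA0.add hPm.measurable
  have hn0 : ∀ y, ‖fderiv ℝ g y‖ ≤ 1 + 4 * ‖v‖ := fun y => (hfd y).trans (by simp)
  have hn1 : ∀ y, ‖fderiv ℝ g y + P y‖ ≤ 1 + 4 * ‖v‖ := fun y =>
    (norm_add_le _ _).trans (add_le_add (hfd y) (hPn y))
  -- change of variables
  have hcv : ∀ s : ℝ, c ≤ s →
      ∫ y in S, (fderiv ℝ g y + P y + s • ContinuousLinearMap.id ℝ (E k)).det =
      ∫ y in S, (fderiv ℝ g y + s • ContinuousLinearMap.id ℝ (E k)).det := by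
    intro s hs
    have hl0 : LipschitzWith (1 + 4 * ‖v‖₊) g := hg.weaken (by simp)
    have hl1 : LipschitzWith (1 + 4 * ‖v‖₊) (fun y => g y + wt y ^ 2 • v) := hg.add (psi_lip v)
    have hlt : ((1 + 4 * ‖v‖₊ : NNReal) : ℝ) < s := by
      push_cast; linarith
    have hs0 : LipschitzWith ‖s‖₊ (fun y : E k => s • y) := lipschitzWith_smul s
    have b0 := bij_add hl0 hlt
    have b1 := bij_add hl1 hlt
    have c0 := cov (hl0.add hs0) b0.1 hS hSB h0
      (fun y => fderiv ℝ g y + s • ContinuousLinearMap.id ℝ (E k))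
      (fun x hx => hx.2.hasFDerivAt.add ((hasFDerivAt_id x).const_smul s))
    have c1 := cov (hl1.add hs0) b1.1 hS hSB h0
      (fun y => fderiv ℝ g y + P y + s • ContinuousLinearMap.id ℝ (E k))
      (fun x hx => (hx.2.hasFDerivAt.add ((psi_deriv (by simpa [hB] using hx.1)).smul_const v)).add
        ((hasFDerivAt_id x).const_smul s))
    have himg : (fun y => g y + s • y) '' B = (fun y => g y + wt y ^ 2 • v + s • y) '' B := by
      rw [← compl_inj_iff, ← image_compl_eq b0, ← image_compl_eq b1]
      refine image_congr fun y hy => ?_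
      have : wt y = 0 := wt_zero (by simpa [hB] using hy)
      simp [this]
    have e0 : ∀ y, |(fderiv ℝ g y + s • ContinuousLinearMap.id ℝ (E k)).det| =
        (fderiv ℝ g y + s • ContinuousLinearMap.id ℝ (E k)).det := fun y =>
      abs_of_pos (det_pos_of_norm_lt _ ((hn0 y).trans_lt (by linarith)))
    have e1 : ∀ y, |(fderiv ℝ g y + P y + s • ContinuousLinearMap.id ℝ (E k)).det| =
        (fderiv ℝ g y + P y + s • ContinuousLinearMap.id ℝ (E k)).det := fun y =>
      abs_of_pos (det_pos_of_norm_lt _ ((hn1 y).trans_lt (by linarith)))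
    simp_rw [e0] at c0
    simp_rw [e1] at c1
    rw [c0, c1, himg]
  have heq : ∫ y in S, (fderiv ℝ g y + P y).det = ∫ y in S, (fderiv ℝ g y).det := by
    rw [hI _ hA1 hn1, hI _ hA0 hn0]
    refine Finset.sum_congr rfl fun j _ => ?_
    rw [hcv _ (by simp)]
  have hz : ∫ y in S, ((fderiv ℝ g y + P y).det - (fderiv ℝ g y).det) = 0 := by
    rw [integral_sub (det_integrable hSfin hA1 hn1) (det_integrable hSfin hA0 hn0), heq, sub_self]
  have hz2 : ∫ y in S, (-4) * inner ℝ v (wt y • fderiv ℝ g y y) = 0 := by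
    rw [← hz]
    refine integral_congr_ae (ae_restrict_of_ae ?_)
    filter_upwards [hQ] with y hy
    rw [rot_det_add hy.2, rot_det hy.2, real_inner_comm]
    simp only [map_smul, inner_smul_left, inner_smul_right]
    simp
    ring
  rw [integral_const_mul] at hz2
  have hz3 : ∫ y in S, inner ℝ v (wt y • fderiv ℝ g y y) = 0 := by linarith
  rw [← hz3]
  symm
  refine setIntegral_eq_integral_of_ae_compl_eq_zero ?_
  filter_upwards [hQ] with y hy hyS
  have : wt y = 0 := wt_zero (by
    by_contra hcon
    exact hyS ⟨by simpa [hB] using hcon, hy.1⟩)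
  simp [this]

theorem ae_comp {k : ℕ} {P : E k → Prop} (hP : ∀ᵐ x : E k, P x) (x : E k) {r : ℝ} (hr : r ≠ 0) :
    ∀ᵐ y : E k, P (x + r • y) := by
  rw [ae_iff] at hP ⊢
  have : {y : E k | ¬ P (x + r • y)} = (fun y => r • y) ⁻¹' ((fun z => x + z) ⁻¹' {z | ¬ P z}) := rfl
  rw [this, Measure.addHaar_preimage_smul _ hr, measure_preimage_add, hP, mul_zero]

theorem integral_deriv {k : ℕ} {g : E k → E k} (hg : LocallyLipschitz g) {a b : E k → E k}
    (ha : Continuous a) (hb : Continuous b) (t₀ : ℝ)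
    (hd : ∀ᵐ y : E k, DifferentiableAt ℝ g (a y + t₀ • b y)) :
    HasDerivAt (fun t : ℝ => ∫ y : E k, wt y • g (a y + t • b y))
      (∫ y : E k, wt y • fderiv ℝ g (a y + t₀ • b y) (b y)) t₀ := by
  let B : Set (E k) := Metric.closedBall 0 1
  have hB : IsCompact B := isCompact_closedBall _ _
  let I : Set ℝ := Icc (t₀ - 1) (t₀ + 1)
  let p : ℝ × E k → E k := fun q => a q.2 + q.1 • b q.2
  have hp : Continuous p := by fun_prop
  obtain ⟨K, hK⟩ := (hg.locallyLipschitzOn (s := p '' (I ×ˢ B))).exists_lipschitzOnWith_of_compact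
    ((isCompact_Icc.prod hB).image hp)
  obtain ⟨D, hD⟩ := hB.exists_bound_of_continuousOn hb.continuousOn
  have hgc : Continuous g := hg.continuous
  have hcont : ∀ t : ℝ, Continuous fun y : E k => wt y • g (a y + t • b y) := fun t =>
    wt_cont.smul (hgc.comp (by fun_prop))
  refine (hasDerivAt_integral_of_dominated_loc_of_lip (𝕜 := ℝ) (μ := (volume : Measure (E k))) (s := I) (F := fun t y => wt y • g (a y + t • b y))
    (F' := fun y => wt y • fderiv ℝ g (a y + t₀ • b y) (b y)) (bound := fun y => K * D * wt y)
    (Icc_mem_nhds (by linarith) (by linarith))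
    (Eventually.of_forall fun t => (hcont t).aestronglyMeasurable)
    ((hcont t₀).integrable_of_hasCompactSupport wt_compact.smul_right) ?_ ?_
    (wt_int.const_mul _) ?_).2
  · refine Measurable.aestronglyMeasurable (wt_cont.measurable.smul ?_)
    exact isBoundedBilinearMap_apply.continuous.measurable.comp
      (((measurable_fderiv ℝ g).comp (by fun_prop : Continuous fun y => a y + t₀ • b y).measurable).prodMk
        hb.measurable)
  · refine Eventually.of_forall fun y => LipschitzOnWith.of_dist_le_mul fun t ht t' ht' => ?_
    rcases le_total 1 ‖y‖ with h | h
    · simp [wt_zero h]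
    have hy : y ∈ B := by simpa [B] using h
    have hD0 : 0 ≤ D := (norm_nonneg _).trans (hD y hy)
    have h1 := hK.dist_le_mul (p (t, y)) ⟨(t, y), ⟨ht, hy⟩, rfl⟩ (p (t', y)) ⟨(t', y), ⟨ht', hy⟩, rfl⟩
    have h2 : dist (p (t, y)) (p (t', y)) ≤ dist t t' * D := by
      simp only [p]
      rw [dist_add_left, dist_eq_norm, ← sub_smul, norm_smul, ← dist_eq_norm]
      exact mul_le_mul_of_nonneg_left (hD y hy) dist_nonneg
    have hw := wt_nonneg y
    rw [Real.coe_nnabs, abs_of_nonneg (by positivity), dist_smul₀, Real.norm_of_nonneg hw]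
    calc wt y * dist (g (p (t, y))) (g (p (t', y))) ≤ wt y * (K * (dist t t' * D)) := by gcongr; exact h1.trans (by gcongr)
      _ = _ := by ring
  · filter_upwards [hd] with y hy
    have h1 : HasDerivAt (fun t : ℝ => a y + t • b y) (b y) t₀ := by
      simpa using ((hasDerivAt_id t₀).smul_const (b y)).const_add (a y)
    exact (hy.hasFDerivAt.comp_hasDerivAt t₀ h1).const_smul (wt y)

theorem M_cont {k : ℕ} {g : E k → E k} (hg : Continuous g) (x : E k) :
    Continuous fun r : ℝ => ∫ y : E k, wt y • g (x + r • y) := by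
  have h := continuous_parametric_integral_of_continuous (μ := (volume : Measure (E k)))
    (f := fun (r : ℝ) (y : E k) => wt y • g (x + r • y))
    (by
      have := wt_cont (k := k)
      simp only [Function.uncurry_def]
      fun_prop) (isCompact_closedBall (0 : E k) 1)
  have e : (fun r : ℝ => ∫ y : E k, wt y • g (x + r • y)) =
      fun r : ℝ => ∫ y in Metric.closedBall (0 : E k) 1, wt y • g (x + r • y) := by
    funext r
    symm
    refine setIntegral_eq_integral_of_forall_compl_eq_zero fun y hy => ?_
    have : wt y = 0 := wt_zero (by simp at hy; exact hy.le)
    simp [this]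
  rw [e]
  exact h

theorem M_tendsto {k : ℕ} {g : E k → E k} (hg : Continuous g) (x : E k) :
    Tendsto (fun r : ℝ => ∫ y : E k, wt y • g (x + r • y)) (𝓝[>] 0)
      (𝓝 ((∫ y : E k, wt y) • g x)) := by
  have h := ((M_cont hg x).tendsto 0).mono_left (nhdsWithin_le_nhds (s := Ioi 0))
  simpa [integral_smul_const] using h

theorem lip_one {k : ℕ} {g : E k → E k} (hg : LocallyLipschitz g)
    (hQ : ∀ᵐ x : E k, DifferentiableAt ℝ g x ∧ Rot (fderiv ℝ g x)) : LipschitzWith 1 g := by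
  have main : ∀ (x h : E k) (r : ℝ), 0 < r →
      ‖(∫ y : E k, wt y • g ((x + h) + r • y)) - ∫ y : E k, wt y • g (x + r • y)‖ ≤
        (∫ y : E k, wt y) * ‖h‖ := by
    intro x h r hr
    have hder : ∀ t : ℝ, HasDerivAt (fun t : ℝ => ∫ y : E k, wt y • g ((x + r • y) + t • h))
        (∫ y : E k, wt y • fderiv ℝ g ((x + r • y) + t • h) h) t := fun t =>
      integral_deriv hg (a := fun y => x + r • y) (b := fun _ => h) (by fun_prop) (by fun_prop) t (by
        filter_upwards [ae_comp hQ (x + t • h) hr.ne'] with y hy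
        rw [add_right_comm]; exact hy.1)
    have hbd : ∀ t : ℝ, ‖∫ y : E k, wt y • fderiv ℝ g ((x + r • y) + t • h) h‖ ≤
        (∫ y : E k, wt y) * ‖h‖ := by
      intro t
      rw [← integral_mul_const]
      refine norm_integral_le_of_norm_le (wt_int.mul_const _) ?_
      filter_upwards [ae_comp hQ (x + t • h) hr.ne'] with y hy
      rw [add_right_comm, norm_smul, Real.norm_of_nonneg (wt_nonneg y)]
      refine mul_le_mul_of_nonneg_left ?_ (wt_nonneg y)
      simpa using (fderiv ℝ g (x + t • h + r • y)).le_of_opNorm_le (rot_norm hy.2) h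
    have := Convex.norm_image_sub_le_of_norm_hasDerivWithin_le (s := univ) (x := (0 : ℝ)) (y := 1)
      (fun t _ => (hder t).hasDerivWithinAt) (fun t _ => hbd t) convex_univ (mem_univ _) (mem_univ _)
    simpa [add_right_comm] using this
  refine LipschitzWith.of_dist_le_mul fun z x => ?_
  have hlim := ((M_tendsto hg.continuous (x + (z - x))).sub (M_tendsto hg.continuous x)).norm
  have hle := le_of_tendsto hlim (b := (∫ y : E k, wt y) * ‖z - x‖) (by
    filter_upwards [self_mem_nhdsWithin] with r hr
    exact main x (z - x) r hr)
  rw [← smul_sub, norm_smul, Real.norm_of_nonneg wt_int_pos.le, add_sub_cancel] at hle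
  have := le_of_mul_le_mul_left hle wt_int_pos
  simpa [dist_eq_norm] using this

theorem M_const {k : ℕ} {g : E k → E k} (hg : LipschitzWith 1 g)
    (hQ : ∀ᵐ x : E k, DifferentiableAt ℝ g x ∧ Rot (fderiv ℝ g x)) (x : E k) {r : ℝ} (hr : 0 < r) :
    ∫ y : E k, wt y • g (x + r • y) = (∫ y : E k, wt y) • g x := by
  have hder : ∀ r : ℝ, 0 < r → HasDerivAt (fun r : ℝ => ∫ y : E k, wt y • g (x + r • y)) 0 r := by
    intro r hr
    have hae := ae_comp hQ x hr.ne'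
    have h1 := integral_deriv hg.locallyLipschitz (a := fun _ => x) (b := fun y => y)
      (by fun_prop) (by fun_prop) r (hae.mono fun y hy => hy.1)
    have hfd : ∀ y, DifferentiableAt ℝ g (x + r • y) →
        HasFDerivAt (fun y => r⁻¹ • g (x + r • y)) (fderiv ℝ g (x + r • y)) y := by
      intro y hy
      have h2 : HasFDerivAt (fun y : E k => x + r • y) (r • ContinuousLinearMap.id ℝ (E k)) y :=
        ((hasFDerivAt_id y).const_smul r).const_add x
      refine ((hy.hasFDerivAt.comp y h2).const_smul r⁻¹).congr_fderiv ?_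
      refine ContinuousLinearMap.ext fun z => ?_
      simp [smul_smul, hr.ne']
    have hk := keyN (g := fun y => r⁻¹ • g (x + r • y)) (by
      refine LipschitzWith.of_dist_le_mul fun y z => ?_
      have h3 := hg.dist_le_mul (x + r • y) (x + r • z)
      rw [dist_add_left, dist_smul₀, Real.norm_of_nonneg hr.le] at h3
      rw [dist_smul₀, Real.norm_of_nonneg (by positivity)]
      rw [inv_mul_le_iff₀ hr]
      simpa using h3) (by
      filter_upwards [hae] with y hy
      have := hfd y hy.1
      exact ⟨this.differentiableAt, by rw [this.fderiv]; exact hy.2⟩)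
    convert h1 using 1
    rw [← hk]
    refine integral_congr_ae ?_
    filter_upwards [hae] with y hy
    rw [(hfd y hy.1).fderiv]
  have hconst : ∀ s : ℝ, 0 < s → ∫ y : E k, wt y • g (x + s • y) = ∫ y : E k, wt y • g (x + r • y) := by
    intro s hs
    have := Convex.norm_image_sub_le_of_norm_hasDerivWithin_le (s := Ioi (0 : ℝ)) (x := r) (y := s)
      (C := 0) (fun t ht => (hder t ht).hasDerivWithinAt) (fun t _ => by simp) (convex_Ioi 0) hr hs
    rw [zero_mul, norm_le_zero_iff, sub_eq_zero] at this
    exact this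
  refine tendsto_nhds_unique ?_ (M_tendsto hg.continuous x)
  refine tendsto_const_nhds.congr' ?_
  filter_upwards [self_mem_nhdsWithin] with s hs
  exact (hconst s hs).symm

theorem u_const {k : ℕ} {g : E k → E k} (hg : LipschitzWith 1 g)
    (hQ : ∀ᵐ x : E k, DifferentiableAt ℝ g x ∧ Rot (fderiv ℝ g x)) (x y h : E k) :
    g (x + h) - g x = g (y + h) - g y := by
  set W := ∫ z : E k, wt z with hW
  have hWpos : 0 < W := wt_int_pos
  set V := volume.real (Metric.closedBall (0 : E k) 2) with hV
  have hgc := hg.continuous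
  let u : E k → E k := fun z => g (z + h) - g z
  have huc : Continuous u := by fun_prop
  have hub : ∀ z, ‖u z‖ ≤ ‖h‖ := by
    intro z
    simpa using hg.norm_sub_le (z + h) z
  have hi : ∀ (f : E k → E k), Continuous f → ∀ e : E k, Integrable fun z => wt (z - e) • f z := by
    intro f hf e
    refine Continuous.integrable_of_hasCompactSupport ?_ ?_
    · exact (wt_cont.comp (by fun_prop)).smul hf
    · refine HasCompactSupport.intro (isCompact_closedBall e 1) fun z hz => ?_
      rw [Metric.mem_closedBall, dist_eq_norm] at hz
      rw [wt_zero (not_le.1 hz).le, zero_smul]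
  have hu : ∀ z : E k, ∀ r : ℝ, 0 < r → W • u z = ∫ y : E k, wt y • u (z + r • y) := by
    intro z r hr
    simp only [u]
    rw [smul_sub, ← M_const hg hQ (z + h) hr, ← M_const hg hQ z hr, ← integral_sub]
    · refine integral_congr_ae (Eventually.of_forall fun y => ?_)
      simp only
      rw [← smul_sub, add_right_comm]
    · simpa using hi (fun y => g (z + h + r • y)) (by fun_prop) 0
    · simpa using hi (fun y => g (z + r • y)) (by fun_prop) 0
  have key : ∀ r : ℝ, 0 < r → ‖y - x‖ ≤ r →
      ‖W • (u x - u y)‖ ≤ (2 * ‖y - x‖ * ‖h‖ * V) * r⁻¹ := by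
    intro r hr hxr
    let e : E k := r⁻¹ • (y - x)
    have hen : ‖e‖ = r⁻¹ * ‖y - x‖ := by
      simp only [e]; rw [norm_smul, Real.norm_of_nonneg (by positivity)]
    have he1 : ‖e‖ ≤ 1 := by rw [hen, inv_mul_le_iff₀ hr]; simpa using hxr
    have h1 : W • u y = ∫ z : E k, wt (z - e) • u (x + r • z) := by
      rw [hu y r hr, ← integral_add_right_eq_self (fun z => wt (z - e) • u (x + r • z)) e]
      refine integral_congr_ae (Eventually.of_forall fun z => ?_)
      simp only [add_sub_cancel_right]
      congr 2
      simp only [e]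
      rw [smul_add, smul_smul, mul_inv_cancel₀ hr.ne', one_smul]
      abel
    rw [smul_sub, h1, hu x r hr, ← integral_sub (by simpa using hi (fun z => u (x + r • z)) (by fun_prop) 0)
      (hi _ (by fun_prop) e)]
    have h2 : ∫ z : E k, (wt z • u (x + r • z) - wt (z - e) • u (x + r • z)) =
        ∫ z in Metric.closedBall (0 : E k) 2, (wt z • u (x + r • z) - wt (z - e) • u (x + r • z)) := by
      symm
      refine setIntegral_eq_integral_of_forall_compl_eq_zero fun z hz => ?_
      have hz2 : 2 < ‖z‖ := by simpa using hz
      have hz3 : 1 ≤ ‖z - e‖ := by linarith [norm_sub_norm_le z e]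
      rw [wt_zero hz3, wt_zero (by linarith)]
      simp
    rw [h2]
    have h3 := norm_setIntegral_le_of_norm_le_const (μ := volume) (s := Metric.closedBall (0 : E k) 2)
      (f := fun z => wt z • u (x + r • z) - wt (z - e) • u (x + r • z)) (C := 2 * ‖e‖ * ‖h‖)
      measure_closedBall_lt_top (fun z _ => by
        rw [← sub_smul, norm_smul]
        refine mul_le_mul ?_ (hub _) (norm_nonneg _) (by positivity)
        simpa using wt_abs z (z - e))
    refine h3.trans (le_of_eq ?_)
    rw [hen]
    ring
  have hlim : Tendsto (fun r : ℝ => (2 * ‖y - x‖ * ‖h‖ * V) * r⁻¹) atTop (𝓝 0) := by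
    simpa using tendsto_inv_atTop_zero.const_mul (2 * ‖y - x‖ * ‖h‖ * V)
  have hle := ge_of_tendsto hlim (by
    filter_upwards [eventually_gt_atTop 0, eventually_ge_atTop ‖y - x‖] with r h1 h2
    exact key r h1 h2)
  have h0 := norm_le_zero_iff.1 hle
  rcases smul_eq_zero.1 h0 with h4 | h4
  · exact absurd h4 hWpos.ne'
  · exact sub_eq_zero.1 h4
/-- **Lemma `lem:lipschitz` (4)** (Liouville-type rigidity): a locally Lipschitz map
`g : ℝ^k → ℝ^k` (`k ≥ 2`) whose Jacobian lies in `SO(k)` almost everywhere is a rigid motion,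
`g(x) = a + Qx` with `Q ∈ SO(k)`. -/
theorem locally_lipschitz_ae_rotation_deriv_rigid
    (k : ℕ) (hk : 2 ≤ k)
    (g : E k → E k) (hg : LocallyLipschitz g)
    (hQ : ∀ᵐ x : E k, DifferentiableAt ℝ g x ∧
      ∃ R : Matrix (Fin k) (Fin k) ℝ, R * Rᵀ = 1 ∧ R.det = 1 ∧
        ∀ v : E k, fderiv ℝ g x v = mulVecE R v) :
    ∃ (a : E k) (Q : Matrix (Fin k) (Fin k) ℝ), Q * Qᵀ = 1 ∧ Q.det = 1 ∧
      ∀ x : E k, g x = a + mulVecE Q x := by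

  have hQ' : ∀ᵐ x : E k, DifferentiableAt ℝ g x ∧ Rot (fderiv ℝ g x) := hQ
  have hg1 := lip_one hg hQ'
  have hu := u_const hg1 hQ'
  let L₀ : E k →+ E k :=
    { toFun := fun h => g h - g 0
      map_zero' := sub_self _
      map_add' := fun x y => by
        have := hu x 0 y
        rw [zero_add] at this
        rw [← this]; abel }
  have hL₀ : Continuous L₀ := by
    show Continuous fun h => g h - g 0
    exact hg1.continuous.sub continuous_const
  let L : E k →L[ℝ] E k := L₀.toRealLinearMap hL₀
  have hgL : ∀ x, g x = g 0 + L x := by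
    intro x
    have : L x = g x - g 0 := rfl
    rw [this]; abel
  obtain ⟨x, -, R, h1, h2, h3⟩ := hQ.exists
  have hfd : fderiv ℝ g x = L := by
    have : HasFDerivAt (fun x => g 0 + L x) L x := L.hasFDerivAt.const_add (g 0)
    rw [← funext hgL] at this
    exact this.fderiv
  refine ⟨g 0, R, h1, h2, fun z => ?_⟩
  rw [← h3, hfd]
  exact hgL z
end
end

section
/- Let p, L ≥ 1, let Φ⁽¹⁾ ∈ ℝ^{p×p}, a ∈ ℝ^p, and let n⁽¹⁾ = 0, n⁽²⁾, …, n⁽ᴸ⁾ ∈ ℝ^p. Define Φ⁽ˡ⁾ := Φ⁽¹⁾ + n⁽ˡ⁾ aᵀ for ℓ ∈ {1, …, L}, and suppose det Φ⁽ˡ⁾ > 0 for every ℓ. Then for all μ₁, …, μ_L ≥ 0 with Σ_ℓ μ_ℓ = 1, det(Σ_{ℓ=1}^L μ_ℓ Φ⁽ˡ⁾) > 0. -/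
open Matrix

noncomputable section

theorem det_aux_rank_one {p : ℕ} (A : Matrix (Fin p) (Fin p) ℝ) (hA : 0 < A.det)
    (u a : Fin p → ℝ) :
    (A + Matrix.vecMulVec u a).det = A.det * (1 + a ⬝ᵥ (A⁻¹ *ᵥ u)) := by
  have hu : IsUnit A.det := (ne_of_gt hA).isUnit
  have h : A + Matrix.vecMulVec u a
      = A * (1 + replicateCol Unit (A⁻¹ *ᵥ u) * replicateRow Unit a) := by
    rw [← vecMulVec_eq, Matrix.mul_add, Matrix.mul_one, mul_vecMulVec, mulVec_mulVec,
      Matrix.mul_nonsing_inv _ hu, one_mulVec]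
  rw [h, det_mul, det_one_add_replicateCol_mul_replicateRow]

/-- **Convex combinations of rank-one perturbations** (threshold affine case of the proof of
Proposition `prop:pwacondition`): if `Φ⁽ˡ⁾ = Φ⁽¹⁾ + n⁽ˡ⁾ aᵀ` with `n⁽¹⁾ = 0` and every
`det Φ⁽ˡ⁾ > 0`, then every convex combination of the `Φ⁽ˡ⁾` has strictly positive
determinant. -/
theorem det_pos_convex_combination_common_rank_one_direction
    (p L : ℕ) (hp : 1 ≤ p) (hL : 1 ≤ L)
    (Φ₁ : Matrix (Fin p) (Fin p) ℝ) (a : Fin p → ℝ)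
    (n : Fin L → (Fin p → ℝ)) (hn0 : n ⟨0, hL⟩ = 0)
    (Φ : Fin L → Matrix (Fin p) (Fin p) ℝ)
    (hΦ : ∀ ℓ, Φ ℓ = Φ₁ + Matrix.vecMulVec (n ℓ) a)
    (hdet : ∀ ℓ, 0 < (Φ ℓ).det) :
    ∀ μ : Fin L → ℝ, (∀ ℓ, 0 ≤ μ ℓ) → (∑ ℓ, μ ℓ) = 1 →
      0 < (∑ ℓ, μ ℓ • Φ ℓ).det := by
  intro μ hμ hs
  have hA : 0 < Φ₁.det := by
    have := hdet ⟨0, hL⟩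
    rw [hΦ, hn0] at this
    simpa using this
  have hsum : ∑ ℓ, μ ℓ • Φ ℓ = Φ₁ + Matrix.vecMulVec (∑ ℓ, μ ℓ • n ℓ) a := by
    simp only [hΦ, smul_add, Finset.sum_add_distrib]
    rw [← Finset.sum_smul, hs, one_smul]
    congr 1
    ext i j
    simp [Matrix.sum_apply, vecMulVec_apply, Finset.sum_mul, mul_assoc]
  have hd : (∑ ℓ, μ ℓ • Φ ℓ).det = ∑ ℓ, μ ℓ * (Φ ℓ).det := by
    rw [hsum, det_aux_rank_one _ hA]
    simp only [hΦ, det_aux_rank_one _ hA]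
    rw [mulVec_sum, dotProduct_sum]
    simp only [mulVec_smul, dotProduct_smul, smul_eq_mul]
    nth_rewrite 1 [← hs]
    rw [← Finset.sum_add_distrib, Finset.mul_sum]
    exact Finset.sum_congr rfl fun ℓ _ => by ring
  rw [hd]
  refine Finset.sum_pos' (fun ℓ _ => mul_nonneg (hμ ℓ) (hdet ℓ).le) ?_
  by_contra hc
  have hz : ∀ ℓ, μ ℓ = 0 := fun ℓ => by
    by_contra h0
    exact hc ⟨ℓ, Finset.mem_univ _, mul_pos (lt_of_le_of_ne (hμ ℓ) (Ne.symm h0)) (hdet ℓ)⟩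
  simp [hz] at hs
end
end

section
/- Let p ≥ 1 and let ψᵢ⁺, ψᵢ⁻ ∈ ℝ^p for i = 1, …, p. Suppose that for every sign vector s ∈ {−1, +1}^p, the p × p matrix whose i-th column is ψᵢ⁺ if sᵢ = +1 and ψᵢ⁻ if sᵢ = −1 has strictly positive determinant. Then for every μ = (μ₁, …, μ_p) ∈ [0, 1]^p, the p × p matrix whose i-th column is μᵢψᵢ⁺ + (1 − μᵢ)ψᵢ⁻ has strictly positive determinant. -/
open Matrix

noncomputable section

/-- **Columnwise convex combinations preserve positive determinants** (piecewise linear case of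
the proof of Proposition `prop:pwacondition`): if every matrix whose `i`-th column is chosen
from `{ψᵢ⁺, ψᵢ⁻}` has strictly positive determinant, then so does every matrix whose `i`-th
column is `μᵢ ψᵢ⁺ + (1 − μᵢ) ψᵢ⁻` with `μᵢ ∈ [0,1]`.
(A sign vector `s ∈ {−1,+1}^p` is encoded as `s : Fin p → Bool`, with `true` standing for `+1`.) -/
theorem det_pos_columnwise_convex_combination
    (p : ℕ) (hp : 1 ≤ p)
    (ψp ψm : Fin p → (Fin p → ℝ))
    (hsign : ∀ s : Fin p → Bool,
      0 < (Matrix.of fun i j => if s j then ψp j i else ψm j i).det) :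
    ∀ μ : Fin p → ℝ, (∀ i, μ i ∈ Set.Icc (0 : ℝ) 1) →
      0 < (Matrix.of fun i j => μ j * ψp j i + (1 - μ j) * ψm j i).det := by
  intro μ hμ
  have key : ∀ S : Finset (Fin p), ∀ s : Fin p → Bool,
      0 < (Matrix.of fun i j => if j ∈ S then μ j * ψp j i + (1 - μ j) * ψm j i
        else if s j then ψp j i else ψm j i).det := by
    intro S
    induction S using Finset.induction_on with
    | empty => intro s; simpa using hsign s
    | insert a S ha ih =>
      intro s
      have h1 := ih (Function.update s a true)
      have h2 := ih (Function.update s a false)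
      set M : Matrix (Fin p) (Fin p) ℝ :=
        Matrix.of fun i j => if j ∈ S then μ j * ψp j i + (1 - μ j) * ψm j i
          else if s j then ψp j i else ψm j i with hM
      have e1 : (Matrix.of fun i j => if j ∈ S then μ j * ψp j i + (1 - μ j) * ψm j i
          else if Function.update s a true j then ψp j i else ψm j i)
          = M.updateCol a (ψp a) := by
        ext i j
        by_cases h : j = a
        · subst h; simp [ha]
        · simp [hM, h, Matrix.updateCol_apply]
      have e2 : (Matrix.of fun i j => if j ∈ S then μ j * ψp j i + (1 - μ j) * ψm j i
          else if Function.update s a false j then ψp j i else ψm j i)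
          = M.updateCol a (ψm a) := by
        ext i j
        by_cases h : j = a
        · subst h; simp [ha]
        · simp [hM, h, Matrix.updateCol_apply]
      have e3 : (Matrix.of fun i j => if j ∈ insert a S then
          μ j * ψp j i + (1 - μ j) * ψm j i
          else if s j then ψp j i else ψm j i)
          = M.updateCol a (μ a • ψp a + (1 - μ a) • ψm a) := by
        ext i j
        by_cases h : j = a
        · subst h; simp
        · simp [hM, h, Matrix.updateCol_apply]
      rw [e1] at h1
      rw [e2] at h2
      rw [e3, Matrix.det_updateCol_add, Matrix.det_updateCol_smul, Matrix.det_updateCol_smul]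
      obtain ⟨h0, h0'⟩ := hμ a
      rcases h0.eq_or_lt with h | h
      · rw [← h]; simpa using h2
      · have := mul_pos h h1
        have := mul_nonneg (sub_nonneg.2 h0') h2.le
        linarith
  simpa using key Finset.univ (fun _ => true)
end
end

section
/- Let p ≥ 1, let f : ℝ^p → ℝ^p be a piecewise affine function with associated matrices Φ⁽¹⁾, …, Φ⁽ᴸ⁾ ∈ ℝ^{p×p}, and let K : ℝ^p → ℝ be a measurable non-negative function with ∫_{ℝ^p} K(u) du = 1 and ∫_{ℝ^p} ‖u‖ K(u) du < ∞. Then f_K(z) := ∫_{ℝ^p} f(z + u) K(u) du is well defined for every z ∈ ℝ^p, and for every x′, x″ ∈ ℝ^p there exists a matrix M in the convex hull of {Φ⁽¹⁾, …, Φ⁽ᴸ⁾} such that f_K(x″) − f_K(x′) = M(x″ − x′). -/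
open MeasureTheory Matrix

noncomputable section

/-- A (continuous) piecewise affine function `f` with regimes `Z`, intercepts `φ`
and coefficient matrices `Φ`: the regimes are convex, nonempty, and partition `ℝ^p`,
and `f z = φ ℓ + Φ ℓ z` on the regime `Z ℓ`. -/
def IsPiecewiseAffine {p L : ℕ} (f : E p → E p) (Z : Fin L → Set (E p))
    (φ : Fin L → E p) (Φ : Fin L → Matrix (Fin p) (Fin p) ℝ) : Prop :=
  Continuous f ∧ (∀ ℓ, Convex ℝ (Z ℓ)) ∧ (∀ ℓ, (Z ℓ).Nonempty) ∧
    (∀ z : E p, ∃! ℓ, z ∈ Z ℓ) ∧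
    ∀ ℓ, ∀ z ∈ Z ℓ, f z = φ ℓ + mulVecE (Φ ℓ) z

/-- The cone `C_I` determined by the vectors `a` and the index set `I`. -/
def coneOf {p : ℕ} (a : Fin p → E p) (I : Set (Fin p)) : Set (E p) :=
  {z | (∀ i ∈ I, 0 ≤ ∑ j, a i j * z j) ∧ (∀ i ∉ I, (∑ j, a i j * z j) < 0)}

/-- A (continuous) piecewise linear function: piecewise affine with zero intercepts, where each
regime is a union of cones `C_I` determined by a fixed basis `a₁, …, a_p` of `ℝ^p`. -/
def IsPiecewiseLinear {p L : ℕ} (f : E p → E p) (Z : Fin L → Set (E p))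
    (φ : Fin L → E p) (Φ : Fin L → Matrix (Fin p) (Fin p) ℝ) : Prop :=
  IsPiecewiseAffine f Z φ Φ ∧ (∀ ℓ, φ ℓ = 0) ∧
    ∃ a : Fin p → E p, LinearIndependent ℝ a ∧ Submodule.span ℝ (Set.range a) = ⊤ ∧
      ∀ ℓ, ∃ S : Set (Set (Fin p)), Z ℓ = ⋃ I ∈ S, coneOf a I

/-- A (continuous) threshold affine function: piecewise affine, whose regimes are the bands
`{z : τ_{ℓ-1} < aᵀz ≤ τ_ℓ}` for some `a ≠ 0` and thresholds `-∞ = τ₀ < τ₁ < ⋯ < τ_L = +∞`. -/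
def IsThresholdAffine {p L : ℕ} (f : E p → E p) (Z : Fin L → Set (E p))
    (φ : Fin L → E p) (Φ : Fin L → Matrix (Fin p) (Fin p) ℝ) : Prop :=
  IsPiecewiseAffine f Z φ Φ ∧
    ∃ a : E p, a ≠ 0 ∧ ∃ τ : Fin (L + 1) → EReal, StrictMono τ ∧
      τ 0 = ⊥ ∧ τ (Fin.last L) = ⊤ ∧
      ∀ ℓ : Fin L, Z ℓ =
        {z : E p | τ ℓ.castSucc < ((∑ j, a j * z j : ℝ) : EReal) ∧
          ((∑ j, a j * z j : ℝ) : EReal) ≤ τ ℓ.succ}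

def mulVecL {p : ℕ} (d : E p) : Matrix (Fin p) (Fin p) ℝ →ₗ[ℝ] E p where
  toFun A := mulVecE A d
  map_add' A B := by simp [mulVecE, Matrix.add_mulVec]
  map_smul' r A := by simp [mulVecE, Matrix.smul_mulVec]

def mulVecR {p : ℕ} (A : Matrix (Fin p) (Fin p) ℝ) : E p →ₗ[ℝ] E p where
  toFun x := mulVecE A x
  map_add' x y := by simp [mulVecE, Matrix.mulVec_add]
  map_smul' r x := by simp [mulVecE, Matrix.mulVec_smul]

lemma pwa_support_bound {p L : ℕ} {f : E p → E p} {Z : Fin L → Set (E p)} {φ : Fin L → E p}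
    {Φ : Fin L → Matrix (Fin p) (Fin p) ℝ} (hf : IsPiecewiseAffine f Z φ Φ)
    (c : E p →L[ℝ] ℝ) (x d : E p) (b : ℝ) (hb : ∀ ℓ, c (mulVecE (Φ ℓ) d) < b) :
    c (f (x + d)) - c (f x) ≤ b := by
  obtain ⟨hcont, -, -, hpart, haff⟩ := hf
  have hline : Continuous fun t : ℝ => x + t • d := by fun_prop
  have hh : Continuous fun t : ℝ => c (f (x + t • d)) := by fun_prop
  have key := image_le_of_liminf_slope_right_le_deriv_boundary
    (f := fun t : ℝ => c (f (x + t • d))) (a := 0) (b := 1) hh.continuousOn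
    (B := fun t => c (f x) + t * b) (B' := fun _ => b) (by simp)
    (by fun_prop)
    (fun t _ => by
      have := ((hasDerivAt_id t).mul_const b).const_add (c (f x))
      simpa using this.hasDerivWithinAt)
    (by
      intro t _ r hr
      have hex : ∃ ℓ, ∃ᶠ z in nhdsWithin t (Set.Ioi t), x + z • d ∈ Z ℓ := by
        by_contra hno
        push Not at hno
        have h1 : ∀ᶠ z in nhdsWithin t (Set.Ioi t), ∀ ℓ, x + z • d ∉ Z ℓ := by
          rw [Filter.eventually_all]
          intro ℓ
          simpa [Filter.not_frequently] using hno ℓ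
        obtain ⟨z, hz⟩ := h1.exists
        obtain ⟨ℓ, hℓ, -⟩ := hpart (x + z • d)
        exact hz ℓ hℓ
      obtain ⟨ℓ, hℓ⟩ := hex
      have hg : Continuous fun z : ℝ => φ ℓ + mulVecR (Φ ℓ) (x + z • d) := by
        have := (mulVecR (Φ ℓ)).continuous_of_finiteDimensional
        fun_prop
      have hcl : IsClosed {z : ℝ | f (x + z • d) = φ ℓ + mulVecR (Φ ℓ) (x + z • d)} :=
        isClosed_eq (hcont.comp hline) hg
      have ht : f (x + t • d) = φ ℓ + mulVecR (Φ ℓ) (x + t • d) := by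
        have : t ∈ closure {z : ℝ | f (x + z • d) = φ ℓ + mulVecR (Φ ℓ) (x + z • d)} := by
          rw [mem_closure_iff_frequently]
          exact (hℓ.filter_mono nhdsWithin_le_nhds).mono fun z hz => haff ℓ _ hz
        rwa [hcl.closure_eq] at this
      refine (hℓ.and_eventually self_mem_nhdsWithin).mono ?_
      rintro z ⟨hz, hzt⟩
      have hzt' : 0 < z - t := sub_pos.2 hzt
      have hz' : f (x + z • d) = φ ℓ + mulVecR (Φ ℓ) (x + z • d) := haff ℓ _ hz
      have hb' : c (mulVecR (Φ ℓ) d) < b := hb ℓ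
      rw [slope_def_field, ht, hz', div_lt_iff₀ hzt']
      simp only [map_add, map_smul, smul_eq_mul]
      nlinarith)
  have := key (x := 1) (by simp)
  simp at this
  linarith

lemma pwa_norm_bound {p L : ℕ} {f : E p → E p} {Z : Fin L → Set (E p)} {φ : Fin L → E p}
    {Φ : Fin L → Matrix (Fin p) (Fin p) ℝ} (hf : IsPiecewiseAffine f Z φ Φ) :
    ∃ A B : ℝ, 0 ≤ A ∧ 0 ≤ B ∧ ∀ z, ‖f z‖ ≤ A + B * ‖z‖ := by
  obtain ⟨-, -, -, hpart, haff⟩ := hf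
  refine ⟨∑ ℓ, ‖φ ℓ‖, ∑ ℓ, ‖(mulVecR (Φ ℓ)).toContinuousLinearMap‖,
    Finset.sum_nonneg fun _ _ => norm_nonneg _, Finset.sum_nonneg fun _ _ => norm_nonneg _, ?_⟩
  intro z
  obtain ⟨ℓ, hℓ, -⟩ := hpart z
  rw [haff ℓ z hℓ]
  refine (norm_add_le _ _).trans (add_le_add ?_ ?_)
  · exact Finset.single_le_sum (f := fun ℓ => ‖φ ℓ‖) (fun _ _ => norm_nonneg _)
      (Finset.mem_univ ℓ)
  · refine ((mulVecR (Φ ℓ)).toContinuousLinearMap.le_opNorm z).trans ?_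
    gcongr
    exact Finset.single_le_sum (f := fun ℓ => ‖(mulVecR (Φ ℓ)).toContinuousLinearMap‖)
      (fun _ _ => norm_nonneg _) (Finset.mem_univ ℓ)

/-- **Convex-hull mean-value property of smoothed piecewise affine maps** (display
`eq:fKdiff` in the proof of Proposition `prop:pwacondition`): for a piecewise affine `f` and an
integrable kernel `K` with `∫ K = 1` and `∫ ‖u‖ K(u) du < ∞`, the convolution
`f_K(z) = ∫ f(z + u) K(u) du` is well defined, and each difference `f_K(x″) − f_K(x′)` equals
`M (x″ − x′)` for some `M` in the convex hull of the regime matrices. -/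
theorem smoothed_piecewise_affine_convex_hull_difference
    (p L : ℕ) (hp : 1 ≤ p) (hL : 1 ≤ L)
    (f : E p → E p) (Z : Fin L → Set (E p)) (φ : Fin L → E p)
    (Φ : Fin L → Matrix (Fin p) (Fin p) ℝ)
    (hf : IsPiecewiseAffine f Z φ Φ)
    (K : E p → ℝ) (hKmeas : Measurable K) (hKpos : ∀ u, 0 ≤ K u)
    (hKone : (∫ u, K u) = 1)
    (hKnorm : Integrable fun u : E p => ‖u‖ * K u) :
    (∀ z : E p, Integrable fun u : E p => K u • f (z + u)) ∧
    ∀ x' x'' : E p, ∃ M ∈ convexHull ℝ (Set.range Φ),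
      (∫ u : E p, K u • f (x'' + u)) - (∫ u : E p, K u • f (x' + u))
        = mulVecE M (x'' - x') := by
  have hKint : Integrable K := by
    by_contra h
    rw [integral_undef h] at hKone
    exact zero_ne_one hKone
  have hint : ∀ z : E p, Integrable fun u : E p => K u • f (z + u) := by
    intro z
    obtain ⟨A, B, hA, hB, hAB⟩ := pwa_norm_bound hf
    have hfc := hf.1
    refine Integrable.mono' ((hKint.const_mul (A + B * ‖z‖)).add (hKnorm.const_mul B))
      (hKmeas.aestronglyMeasurable.smul
        (Continuous.aestronglyMeasurable (by fun_prop))) (Filter.Eventually.of_forall ?_)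
    intro u
    rw [norm_smul, Real.norm_of_nonneg (hKpos u)]
    have h1 := hAB (z + u)
    have h2 : B * ‖z + u‖ ≤ B * (‖z‖ + ‖u‖) := by gcongr; exact norm_add_le _ _
    have h3 : K u * ‖f (z + u)‖ ≤ K u * (A + B * (‖z‖ + ‖u‖)) :=
      mul_le_mul_of_nonneg_left (by linarith) (hKpos u)
    refine h3.trans (le_of_eq ?_)
    simp only [Pi.add_apply]
    ring
  refine ⟨hint, fun x' x'' => ?_⟩
  set I := (∫ u : E p, K u • f (x'' + u)) - (∫ u : E p, K u • f (x' + u)) with hI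
  suffices h : I ∈ mulVecL (x'' - x') '' convexHull ℝ (Set.range Φ) by
    obtain ⟨M, hM, h⟩ := h
    exact ⟨M, hM, h.symm⟩
  by_contra hnot
  have hclosed : IsClosed (mulVecL (x'' - x') '' convexHull ℝ (Set.range Φ)) := by
    rw [(mulVecL (x'' - x')).image_convexHull]
    exact (((Set.finite_range Φ).image _).isCompact_convexHull (𝕜 := ℝ)).isClosed
  obtain ⟨c, b, hc, hb⟩ := geometric_hahn_banach_closed_point
    ((convex_convexHull ℝ (Set.range Φ)).linear_image (mulVecL (x'' - x'))) hclosed hnot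
  have hpt : ∀ u, K u * c (f (x'' + u)) - K u * c (f (x' + u)) ≤ K u * b := by
    intro u
    have := pwa_support_bound hf c (x' + u) (x'' - x') b
      (fun ℓ => hc _ ⟨Φ ℓ, subset_convexHull ℝ _ ⟨ℓ, rfl⟩, rfl⟩)
    rw [show x' + u + (x'' - x') = x'' + u by abel] at this
    rw [← mul_sub]
    exact mul_le_mul_of_nonneg_left this (hKpos u)
  have hci : ∀ z : E p, Integrable fun u : E p => K u * c (f (z + u)) := fun z => by
    simpa using c.integrable_comp (hint z)
  have hce : ∀ z : E p, c (∫ u : E p, K u • f (z + u)) = ∫ u : E p, K u * c (f (z + u)) := by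
    intro z
    rw [← c.integral_comp_comm (hint z)]
    simp
  have hle := integral_mono ((hci x'').sub (hci x')) (hKint.mul_const b) hpt
  have hs := integral_sub (hci x'') (hci x')
  rw [integral_mul_const, hKone, one_mul] at hle
  rw [hI, map_sub, hce, hce, ← hs] at hb
  exact absurd hb (not_lt.2 hle)
end
end

section
/- Let p, L ≥ 1 and let Φ⁽¹⁾, …, Φ⁽ᴸ⁾ ∈ ℝ^{p×p} be such that every matrix in their convex hull is invertible. Suppose f : ℝ^p → ℝ^p has the property that for every x′, x″ ∈ ℝ^p there exists a matrix M in the convex hull of {Φ⁽¹⁾, …, Φ⁽ᴸ⁾} with f(x″) − f(x′) = M(x″ − x′). Then there exist constants 0 < c ≤ C < ∞ such that c‖x″ − x′‖ ≤ ‖f(x″) − f(x′)‖ ≤ C‖x″ − x′‖ for all x′, x″ ∈ ℝ^p; in particular f is injective and bi-Lipschitz onto its image. -/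
open Matrix

noncomputable section

/-- **Bi-Lipschitz bounds from the convex-hull mean-value property** (used in the proof of
Proposition `prop:pwacondition`): if every matrix in the convex hull of `{Φ⁽¹⁾, …, Φ⁽ᴸ⁾}` is
invertible, and every difference `f(x″) − f(x′)` equals `M (x″ − x′)` for some `M` in that
hull, then `f` satisfies two-sided Lipschitz bounds; in particular it is injective. -/
theorem convex_hull_difference_biLipschitz
    (p L : ℕ) (hp : 1 ≤ p) (hL : 1 ≤ L)
    (Φ : Fin L → Matrix (Fin p) (Fin p) ℝ)
    (hinv : ∀ M ∈ convexHull ℝ (Set.range Φ), IsUnit M)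
    (f : E p → E p)
    (hf : ∀ x' x'' : E p, ∃ M ∈ convexHull ℝ (Set.range Φ),
      f x'' - f x' = mulVecE M (x'' - x')) :
    ∃ c C : ℝ, 0 < c ∧ c ≤ C ∧
      (∀ x' x'' : E p,
        c * ‖x'' - x'‖ ≤ ‖f x'' - f x'‖ ∧ ‖f x'' - f x'‖ ≤ C * ‖x'' - x'‖) ∧
      Function.Injective f := by
  have hK1 : IsCompact (convexHull ℝ (Set.range Φ)) :=
    (Set.finite_range Φ).isCompact_convexHull ℝ
  have hK : IsCompact ((convexHull ℝ (Set.range Φ)) ×ˢ (Metric.sphere (0 : E p) 1)) :=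
    hK1.prod (isCompact_sphere _ _)
  have hcont : Continuous (fun q : Matrix (Fin p) (Fin p) ℝ × E p => ‖mulVecE q.1 q.2‖) := by
    unfold mulVecE
    refine continuous_norm.comp ((PiLp.continuous_toLp 2 _).comp ?_)
    exact Continuous.matrix_mulVec continuous_fst
      ((PiLp.continuous_ofLp 2 _).comp continuous_snd)
  have hne : ((convexHull ℝ (Set.range Φ)) ×ˢ (Metric.sphere (0 : E p) 1)).Nonempty := by
    refine ⟨(Φ ⟨0, hL⟩, EuclideanSpace.single ⟨0, hp⟩ 1), ?_, ?_⟩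
    · exact subset_convexHull ℝ _ ⟨_, rfl⟩
    · simp
  obtain ⟨a, ha, hmin⟩ := hK.exists_isMinOn hne hcont.continuousOn
  obtain ⟨b, hb, hmax⟩ := hK.exists_isMaxOn hne hcont.continuousOn
  have hmin' : ∀ M ∈ convexHull ℝ (Set.range Φ), ∀ u ∈ Metric.sphere (0 : E p) 1,
      ‖mulVecE a.1 a.2‖ ≤ ‖mulVecE M u‖ :=
    fun M hM u hu => isMinOn_iff.mp hmin (M, u) (Set.mk_mem_prod hM hu)
  have hmax' : ∀ M ∈ convexHull ℝ (Set.range Φ), ∀ u ∈ Metric.sphere (0 : E p) 1,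
      ‖mulVecE M u‖ ≤ ‖mulVecE b.1 b.2‖ :=
    fun M hM u hu => isMaxOn_iff.mp hmax (M, u) (Set.mk_mem_prod hM hu)
  have hpos : 0 < ‖mulVecE a.1 a.2‖ := by
    rw [norm_pos_iff]
    intro h0
    have h1 : a.1.mulVec a.2 = 0 := by
      have := congrArg WithLp.ofLp h0
      simpa [mulVecE] using this
    have h2 : (a.2 : Fin p → ℝ) = 0 := by
      apply Matrix.mulVec_injective_of_isUnit (hinv a.1 ha.1)
      simpa using h1
    have h3 : a.2 = 0 := by
      ext i
      exact congrFun h2 i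
    have h4 := ha.2
    rw [h3] at h4
    simp at h4
  have key : ∀ x' x'' : E p,
      ‖mulVecE a.1 a.2‖ * ‖x'' - x'‖ ≤ ‖f x'' - f x'‖ ∧
        ‖f x'' - f x'‖ ≤ ‖mulVecE b.1 b.2‖ * ‖x'' - x'‖ := by
    intro x' x''
    obtain ⟨M, hM, h⟩ := hf x' x''
    rw [h]
    generalize x'' - x' = v
    by_cases hv : v = 0
    · subst hv
      simp [mulVecE]
    have hv' : 0 < ‖v‖ := norm_pos_iff.mpr hv
    have hu : ‖v‖⁻¹ • v ∈ Metric.sphere (0 : E p) 1 := by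
      simp [norm_smul, hv'.ne']
    have e : ‖mulVecE M v‖ = ‖mulVecE M (‖v‖⁻¹ • v)‖ * ‖v‖ := by
      have : mulVecE M (‖v‖⁻¹ • v) = ‖v‖⁻¹ • mulVecE M v := by
        simp [mulVecE, Matrix.mulVec_smul]
      rw [this, norm_smul, norm_inv, norm_norm]
      field_simp
    rw [e]
    exact ⟨mul_le_mul_of_nonneg_right (hmin' M hM _ hu) hv'.le,
      mul_le_mul_of_nonneg_right (hmax' M hM _ hu) hv'.le⟩
  refine ⟨_, _, hpos, hmin' b.1 hb.1 b.2 hb.2, key, ?_⟩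
  intro x y hxy
  have h := (key y x).1
  rw [hxy, sub_self, norm_zero] at h
  have h2 : ‖x - y‖ = 0 := by
    nlinarith [norm_nonneg (x - y)]
  exact sub_eq_zero.mp (norm_eq_zero.mp h2)
end
end

section
/- Let G ≥ 2, let H, S ∈ ℝ^{G×G} be symmetric positive definite matrices, and let g : ℝ^G → ℝ^G be locally Lipschitz. Suppose that for Lebesgue-almost every w ∈ ℝ^G, g is differentiable at w with det Dg(w) > 0 and Dg(w) H⁻¹ Dg(w)ᵀ = S. Then g is affine: there exist a ∈ ℝ^G and M ∈ ℝ^{G×G} such that g(w) = a + Mw for all w ∈ ℝ^G. -/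
open MeasureTheory Matrix

noncomputable section

lemma null_image {n : ℕ} {f : E n → E n} {K : NNReal} (hf : LipschitzWith K f) {s : Set (E n)}
    (hs : volume s = 0) : volume (f '' s) = 0 := by
  have h1 : (volume : Measure (E n)) ≪ μH[Module.finrank ℝ (E n)] :=
    Measure.absolutelyContinuous_isAddHaarMeasure _ _
  have h2 : (μH[Module.finrank ℝ (E n)] : Measure (E n)) ≪ volume :=
    Measure.absolutelyContinuous_isAddHaarMeasure _ _
  apply h1
  have := hf.hausdorffMeasure_image_le (d := Module.finrank ℝ (E n)) (by positivity) s
  rw [h2 hs, mul_zero] at this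
  exact le_antisymm this bot_le

lemma ae_comp_of_lip {n : ℕ} {P : E n → Prop} (hP : ∀ᵐ x, P x) {T T' : E n → E n} {K : NNReal}
    (hT' : LipschitzWith K T') (hTT : ∀ z, T' (T z) = z) : ∀ᵐ z, P (T z) := by
  rw [ae_iff] at hP ⊢
  refine measure_mono_null ?_ (null_image hT' hP)
  intro z hz
  exact ⟨T z, hz, hTT z⟩

/-- The matrix of a continuous linear map in the standard basis. -/
def matE {n : ℕ} (T : E n →L[ℝ] E n) : Matrix (Fin n) (Fin n) ℝ :=
  Matrix.of fun a b => T (EuclideanSpace.single b 1) a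

lemma matE_eq {n : ℕ} (T : E n →L[ℝ] E n) :
    matE T = LinearMap.toMatrix (EuclideanSpace.basisFun (Fin n) ℝ).toBasis
      (EuclideanSpace.basisFun (Fin n) ℝ).toBasis (T : E n →ₗ[ℝ] E n) := by
  ext a b
  simp [matE, LinearMap.toMatrix_apply]

lemma det_eq_matE {n : ℕ} (T : E n →L[ℝ] E n) : T.det = (matE T).det := by
  rw [matE_eq, LinearMap.det_toMatrix]

lemma matE_one_add {n : ℕ} (T : E n →L[ℝ] E n) (s : ℝ) :
    matE (ContinuousLinearMap.id ℝ (E n) + s • T) = 1 + s • matE T := by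
  ext a b
  simp [matE, Matrix.one_apply]

lemma exists_weights (n : ℕ) (δ : ℝ) (hδ : 0 < δ) : ∃ (s w : Fin (n + 1) → ℝ),
    (∀ k, 0 < s k ∧ s k < δ) ∧
    ∀ A : Matrix (Fin n) (Fin n) ℝ, A.det = ∑ k, w k * (1 + s k • A).det := by
  let s : Fin (n + 1) → ℝ := fun k => δ * ((k : ℝ) + 1) / (n + 2)
  have hinj : Function.Injective s := by
    intro a b hab
    simp only [s] at hab
    field_simp at hab
    have : (a : ℝ) = b := by linarith
    exact Fin.ext (by exact_mod_cast this)
  refine ⟨s, fun k => (Lagrange.basis Finset.univ s k).coeff n, ?_, ?_⟩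
  · intro k
    have hk : (k : ℝ) ≤ n := by exact_mod_cast Nat.lt_succ_iff.1 k.2
    refine ⟨by simp only [s]; positivity, ?_⟩
    simp only [s]
    rw [div_lt_iff₀ (by positivity)]
    nlinarith
  · intro A
    set P : Polynomial ℝ := ((Polynomial.X : Polynomial ℝ) • A.map Polynomial.C +
      (1 : Matrix (Fin n) (Fin n) ℝ).map Polynomial.C).det with hPdef
    have hdeg : P.degree < (Finset.univ : Finset (Fin (n + 1))).card := by
      refine lt_of_le_of_lt Polynomial.degree_le_natDegree ?_
      have := Polynomial.natDegree_det_X_add_C_le A 1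
      simp only [Fintype.card_fin, Finset.card_univ] at this ⊢
      exact_mod_cast Nat.lt_succ_of_le this
    have h1 : P.coeff n = A.det := by
      have := Polynomial.coeff_det_X_add_C_card A 1
      rw [Fintype.card_fin] at this
      exact this
    have h2 := Lagrange.eq_interpolate (s := Finset.univ) hinj.injOn hdeg
    have h3 : ∀ t : ℝ, P.eval t = (1 + t • A).det := by
      intro t
      rw [hPdef, ← Polynomial.coe_evalRingHom, RingHom.map_det]
      congr 1
      ext a b
      by_cases hab : a = b
      · simp [hab]; ring
      · simp [hab]; ring
    rw [← h1]
    conv_lhs => rw [h2, Lagrange.interpolate_apply, Polynomial.finsetSum_coeff]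
    refine Finset.sum_congr rfl fun k _ => ?_
    rw [Polynomial.coeff_C_mul, h3]
    ring

lemma det_one_add_pos {n : ℕ} (T : E n →L[ℝ] E n) (hT : ‖T‖ < 1) :
    0 < (ContinuousLinearMap.id ℝ (E n) + T).det := by
  have hne : ∀ t ∈ Set.Icc (0:ℝ) 1, (ContinuousLinearMap.id ℝ (E n) + t • T).det ≠ 0 := by
    intro t ht hdet
    have hu : IsUnit (1 - (-(t • T))) := by
      apply isUnit_one_sub_of_norm_lt_one
      rw [norm_neg, norm_smul, Real.norm_eq_abs, abs_of_nonneg ht.1]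
      nlinarith [norm_nonneg T, ht.2]
    have hu2 : IsUnit (LinearMap.det ((ContinuousLinearMap.id ℝ (E n) + t • T : E n →L[ℝ] E n) :
        E n →ₗ[ℝ] E n)) := by
      apply IsUnit.map
      have := hu.map (ContinuousLinearMap.toLinearMapRingHom (R₁ := ℝ) (M₁ := E n))
      rw [sub_neg_eq_add] at this
      exact this
    exact hu2.ne_zero hdet
  have hcont : Continuous fun t : ℝ => (ContinuousLinearMap.id ℝ (E n) + t • T).det := by
    simp only [det_eq_matE, matE_one_add]
    fun_prop
  by_contra hneg
  push Not at hneg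
  have h0 : (ContinuousLinearMap.id ℝ (E n) + (0:ℝ) • T).det = 1 := by
    simp [det_eq_matE, matE_one_add]
  have h1 : (ContinuousLinearMap.id ℝ (E n) + (1:ℝ) • T).det ≤ 0 := by simpa using hneg
  have := intermediate_value_Icc' (zero_le_one (α := ℝ)) hcont.continuousOn
  obtain ⟨t, ht, h⟩ := this (show (0:ℝ) ∈ _ from ⟨h1, by rw [h0]; norm_num⟩)
  exact hne t ht h

lemma area_id_add {n : ℕ} {h : E n → E n} {K : NNReal} (hh : LipschitzWith K h) {R : ℝ}
    (hsupp : ∀ x, R ≤ ‖x‖ → h x = 0) {s : ℝ} (hs : 0 < s) (hsK : s * K < 1) :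
    IntegrableOn (fun x => (ContinuousLinearMap.id ℝ (E n) + s • fderiv ℝ h x).det)
      (Metric.ball 0 R) ∧
    ∫ x in Metric.ball (0 : E n) R, (ContinuousLinearMap.id ℝ (E n) + s • fderiv ℝ h x).det =
      volume.real (Metric.ball (0 : E n) R) := by
  set F : E n → E n := fun x => x + s • h x with hF
  have hdist : ∀ x y, ‖s • h x - s • h y‖ ≤ (s * K) * ‖x - y‖ := by
    intro x y
    rw [← smul_sub, norm_smul, Real.norm_eq_abs, abs_of_pos hs, mul_assoc]
    have := hh.norm_sub_le x y
    gcongr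
  have happ : ApproximatesLinearOn F
      ((ContinuousLinearEquiv.refl ℝ (E n) : E n ≃L[ℝ] E n) : E n →L[ℝ] E n) Set.univ
      ⟨s * K, by positivity⟩ := by
    intro x _ y _
    have : F x - F y - ((ContinuousLinearEquiv.refl ℝ (E n) : E n ≃L[ℝ] E n) : E n →L[ℝ] E n)
      (x - y) = s • h x - s • h y := by simp [hF]; abel
    rw [this]
    exact hdist x y
  have hc : Subsingleton (E n) ∨ (⟨s * K, by positivity⟩ : NNReal) <
      ‖(((ContinuousLinearEquiv.refl ℝ (E n) : E n ≃L[ℝ] E n).symm : E n ≃L[ℝ] E n) :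
        E n →L[ℝ] E n)‖₊⁻¹ := by
    rcases subsingleton_or_nontrivial (E n) with h | h
    · exact Or.inl h
    · right
      have : ‖(((ContinuousLinearEquiv.refl ℝ (E n) : E n ≃L[ℝ] E n).symm : E n ≃L[ℝ] E n) :
        E n →L[ℝ] E n)‖₊ = 1 := by
        simp
      rw [this, inv_one]
      exact hsK
  have hsurj := happ.surjective hc
  have hinj : Function.Injective F := by
    intro x y hxy
    have h1 := hdist x y
    have h2 : x - y = -(s • h x - s • h y) := by
      simp only [hF] at hxy
      have : x - y - -(s • h x - s • h y) = (x + s • h x) - (y + s • h y) := by abel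
      rw [← sub_eq_zero, this, hxy, sub_self]
    rw [h2, norm_neg, ← norm_neg, ← h2] at h1
    have h3 : ‖x - y‖ = 0 := by nlinarith [norm_nonneg (x - y)]
    exact sub_eq_zero.1 (norm_eq_zero.1 h3)
  have hout : ∀ x, x ∉ Metric.ball (0 : E n) R → F x = x := by
    intro x hx
    have : R ≤ ‖x‖ := by simpa using hx
    simp [hF, hsupp x this]
  have himg : F '' Metric.ball 0 R = Metric.ball 0 R := by
    ext y
    constructor
    · rintro ⟨x, hx, rfl⟩
      by_contra hy
      exact hy (by rw [hinj (hout _ hy)]; exact hx)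
    · intro hy
      obtain ⟨x, rfl⟩ := hsurj y
      by_cases hx : x ∈ Metric.ball (0 : E n) R
      · exact ⟨x, hx, rfl⟩
      · rw [hout x hx] at hy
        exact absurd hy hx
  have hFlip : LipschitzWith (1 + ⟨s * K, by positivity⟩) F := by
    apply LipschitzWith.id.add
    apply LipschitzWith.of_dist_le_mul
    intro x y
    rw [dist_eq_norm, dist_eq_norm]
    exact hdist x y
  set D : Set (E n) := {x | DifferentiableAt ℝ h x} with hD
  have hDm : MeasurableSet D := measurableSet_of_differentiableAt ℝ h
  have hDae : ∀ᵐ x, x ∈ D := hh.ae_differentiableAt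
  set B := Metric.ball (0 : E n) R with hB
  have hBm : MeasurableSet B := measurableSet_ball
  have hder : ∀ x ∈ B ∩ D, HasFDerivWithinAt F
      (ContinuousLinearMap.id ℝ (E n) + s • fderiv ℝ h x) (B ∩ D) x := by
    intro x hx
    exact ((hasFDerivAt_id x).add (hx.2.hasFDerivAt.const_smul s)).hasFDerivWithinAt
  have hBD : (B ∩ D : Set (E n)) =ᵐ[volume] B := by
    filter_upwards [hDae] with x hx
    apply propext
    exact ⟨fun h => h.1, fun h => ⟨h, hx⟩⟩
  have hIm : (F '' (B ∩ D) : Set (E n)) =ᵐ[volume] B := by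
    apply Filter.EventuallyLE.antisymm
    · apply Filter.Eventually.of_forall
      have : F '' (B ∩ D) ⊆ F '' B := Set.image_mono Set.inter_subset_left
      rw [himg] at this
      exact this
    · have : volume (F '' Dᶜ) = 0 := null_image hFlip hDae
      filter_upwards [(compl_mem_ae_iff (μ := volume)).2 this] with y hy hyB
      rw [← himg] at hyB
      obtain ⟨x, hx, rfl⟩ := hyB
      refine ⟨x, ⟨hx, ?_⟩, rfl⟩
      by_contra hxD
      exact hy ⟨x, hxD, rfl⟩
  have hpos : ∀ x, 0 < (ContinuousLinearMap.id ℝ (E n) + s • fderiv ℝ h x).det := by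
    intro x
    apply det_one_add_pos
    rw [norm_smul, Real.norm_eq_abs, abs_of_pos hs]
    refine lt_of_le_of_lt ?_ hsK
    gcongr
    exact norm_fderiv_le_of_lipschitz ℝ hh
  have e1 := integral_image_eq_integral_abs_det_fderiv_smul volume (hBm.inter hDm) hder
    hinj.injOn (fun _ => (1:ℝ))
  have e2 := (integrableOn_image_iff_integrableOn_abs_det_fderiv_smul volume (hBm.inter hDm) hder
    hinj.injOn (fun _ => (1:ℝ))).1 (by
      rw [integrableOn_congr_set_ae hIm]
      simp [hB, measure_ball_lt_top])
  simp only [abs_of_pos (hpos _), smul_eq_mul, mul_one] at e1 e2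
  rw [setIntegral_congr_set hIm, setIntegral_congr_set hBD] at e1
  rw [integrableOn_congr_set_ae hBD] at e2
  refine ⟨e2, ?_⟩
  rw [← e1]
  simp

lemma integral_det_eq_zero {n : ℕ} (hn : 0 < n) {h : E n → E n} {K : NNReal}
    (hh : LipschitzWith K h) {R : ℝ} (hsupp : ∀ x, R ≤ ‖x‖ → h x = 0) :
    ∫ x in Metric.ball (0 : E n) R, (fderiv ℝ h x).det = 0 := by
  obtain ⟨s, w, hs, hw⟩ := exists_weights n (1 / (K + 1)) (by positivity)
  have hsK : ∀ k, s k * K < 1 := by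
    intro k
    have h1 := (hs k).2
    rw [lt_div_iff₀ (by positivity)] at h1
    nlinarith [(hs k).1]
  have hw' : ∀ T : E n →L[ℝ] E n,
      T.det = ∑ k, w k * (ContinuousLinearMap.id ℝ (E n) + s k • T).det := by
    intro T
    simp only [det_eq_matE, matE_one_add]
    exact hw _
  have hsum : ∑ k, w k = 0 := by
    have hne : Nonempty (Fin n) := ⟨⟨0, hn⟩⟩
    have := hw 0
    simpa [Matrix.det_zero] using this.symm
  rw [setIntegral_congr_fun measurableSet_ball fun x _ => hw' (fderiv ℝ h x)]
  rw [integral_finsetSum]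
  · simp only [integral_const_mul, (area_id_add hh hsupp (hs _).1 (hsK _)).2]
    rw [← Finset.sum_mul, hsum, zero_mul]
  · intro k _
    exact (area_id_add hh hsupp (hs k).1 (hsK k)).1.const_mul _

lemma lip_of_ae_real {n : ℕ} {u : E n → ℝ} (hu : LocallyLipschitz u) {C : ℝ}
    (h : ∀ᵐ x, DifferentiableAt ℝ u x ∧ ‖fderiv ℝ u x‖ ≤ C) (x y : E n) :
    |u y - u x| ≤ C * ‖y - x‖ := by
  set v := y - x with hv
  obtain ⟨N, hNsub, hNm, hN0⟩ := exists_measurable_superset_of_null (ae_iff.1 h)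
  have hgood : ∀ z, z ∉ N → DifferentiableAt ℝ u z ∧ ‖fderiv ℝ u z‖ ≤ C := by
    intro z hz
    by_contra hcon
    exact hz (hNsub hcon)
  have hNae : ∀ᵐ z : E n, z ∉ N := by
    rw [ae_iff]; simpa using hN0
  have hswap : ∀ᵐ z : E n, ∀ᵐ t : ℝ, z + t • v ∉ N := by
    rw [Measure.ae_ae_comm (p := fun (z : E n) (t : ℝ) => z + t • v ∉ N)]
    · refine Filter.Eventually.of_forall fun t => ?_
      exact ae_comp_of_lip hNae (T := fun z => z + t • v) (T' := fun z => z - t • v)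
        (K := 1 + 0) (LipschitzWith.id.sub (LipschitzWith.const _)) (by simp)
    · exact (hNm.preimage (by fun_prop : Measurable fun p : E n × ℝ => p.1 + p.2 • v)).compl
  have hae : ∀ᵐ z : E n, |u (z + v) - u z| ≤ C * ‖v‖ := by
    filter_upwards [hswap] with z hz
    set φ : ℝ → ℝ := fun t => u (z + t • v) with hφ
    have hloc : LocallyLipschitz φ := by
      have : LocallyLipschitz fun t : ℝ => z + t • v := by
        have h1 : ContDiff ℝ 1 fun t : ℝ => z + t • v := by fun_prop
        exact h1.locallyLipschitz
      exact hu.comp this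
    obtain ⟨K, hK⟩ := (hloc.locallyLipschitzOn (s := Set.uIcc 0 1)).exists_lipschitzOnWith_of_compact
      isCompact_uIcc
    have hint := hK.absolutelyContinuousOnInterval.integral_deriv_eq_sub
    have hb : ‖∫ t in (0:ℝ)..1, deriv φ t‖ ≤ (C * ‖v‖) * |1 - 0| := by
      apply intervalIntegral.norm_integral_le_of_norm_le_const_ae
      filter_upwards [hz] with t ht _
      obtain ⟨h1, h2⟩ := hgood _ ht
      have hd : HasDerivAt φ (fderiv ℝ u (z + t • v) v) t := by
        have h3 : HasDerivAt (fun t : ℝ => z + t • v) v t := by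
          simpa using ((hasDerivAt_id t).smul_const v).const_add z
        exact h1.hasFDerivAt.comp_hasDerivAt t h3
      rw [hd.deriv]
      exact ((fderiv ℝ u (z + t • v)).le_opNorm v).trans (by gcongr)
    rw [hint] at hb
    simpa [hφ] using hb
  have hcl : IsClosed {z : E n | |u (z + v) - u z| ≤ C * ‖v‖} := by
    have := hu.continuous
    exact isClosed_le (by fun_prop) (by fun_prop)
  have hd := (Measure.dense_of_ae hae).closure_eq
  rw [hcl.closure_eq] at hd
  have : x ∈ {z : E n | |u (z + v) - u z| ≤ C * ‖v‖} := by rw [hd]; trivial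
  simpa [hv] using this

lemma lip_of_ae {n : ℕ} {f : E n → E n} (hf : LocallyLipschitz f)
    (h : ∀ᵐ x, DifferentiableAt ℝ f x ∧ ‖fderiv ℝ f x‖ ≤ 1) : LipschitzWith 1 f := by
  apply LipschitzWith.of_dist_le_mul
  intro y x
  rw [dist_eq_norm, dist_eq_norm, NNReal.coe_one, one_mul]
  set e := f y - f x with he
  have h1 := lip_of_ae_real (u := fun z => inner ℝ e (f z)) (C := ‖e‖)
    ((innerSL ℝ e).lipschitz.locallyLipschitz.comp hf) (by
      filter_upwards [h] with z hz
      have hd : HasFDerivAt (fun z => inner ℝ e (f z)) ((innerSL ℝ e).comp (fderiv ℝ f z)) z :=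
        (innerSL ℝ e).hasFDerivAt.comp z hz.1.hasFDerivAt
      refine ⟨hd.differentiableAt, ?_⟩
      rw [hd.fderiv]
      refine (ContinuousLinearMap.opNorm_comp_le _ _).trans ?_
      rw [innerSL_apply_norm]
      have := norm_nonneg e
      nlinarith [hz.2]) x y
  rw [← inner_sub_right, ← he, real_inner_self_eq_norm_sq, abs_of_nonneg (by positivity)] at h1
  rcases eq_or_lt_of_le (norm_nonneg e) with h0 | h0
  · rw [← h0]; positivity
  · nlinarith

/-- `f` is `1`-Lipschitz and a.e. its derivative is orthogonal with determinant `c`. -/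
structure OrthoAE {n : ℕ} (c : ℝ) (f : E n → E n) : Prop where
  lip : LipschitzWith 1 f
  ae : ∀ᵐ x, DifferentiableAt ℝ f x ∧ (matE (fderiv ℝ f x)) * (matE (fderiv ℝ f x))ᵀ = 1 ∧
    (matE (fderiv ℝ f x)).det = c

lemma det_updateRow_ortho {n : ℕ} {c : ℝ} {A : Matrix (Fin n) (Fin n) ℝ} (h1 : A * Aᵀ = 1)
    (h2 : A.det = c) (i : Fin n) (v : Fin n → ℝ) :
    (A.updateRow i v).det = c * ∑ j, v j * A i j := by
  have hadj : A.adjugate = c • Aᵀ := by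
    calc A.adjugate = A.adjugate * (A * Aᵀ) := by rw [h1, mul_one]
      _ = c • Aᵀ := by rw [← mul_assoc, adjugate_mul, h2, smul_mul_assoc, one_mul]
  rw [← cramer_transpose_apply, cramer_eq_adjugate_mulVec, ← adjugate_transpose, hadj]
  simp [Matrix.mulVec, dotProduct, Finset.mul_sum]
  refine Finset.sum_congr rfl fun j _ => by ring

lemma weak_harmonic {n : ℕ} {c : ℝ} (hc : c ≠ 0) {f : E n → E n} (hf : OrthoAE c f)
    {η : E n → ℝ} {K : NNReal} (hη : LipschitzWith K η) {R : ℝ} (hR : 0 ≤ R)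
    (hsupp : ∀ x, R ≤ ‖x‖ → η x = 0) (i : Fin n) :
    ∃ R' ≥ R, ∫ x in Metric.ball (0 : E n) R',
      ∑ j, fderiv ℝ η x (EuclideanSpace.single j 1) *
        fderiv ℝ f x (EuclideanSpace.single j 1) i = 0 := by
  have hn : 0 < n := Fin.pos i
  set a : ℝ := ‖f 0‖ + 2 * (R + 1) with ha
  have haR : R ≤ a := by have := norm_nonneg (f 0); linarith
  set m : E n → ℝ := fun x => max 0 (a - ‖x‖) with hm
  have hmlip : LipschitzWith 1 m := by
    have : LipschitzWith (max 0 (0 + 1)) m :=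
      (LipschitzWith.const (0:ℝ)).max ((LipschitzWith.const a).sub lipschitzWith_one_norm)
    simpa using this
  have hcomp : ∀ j, LipschitzWith 1 fun x => f x j := by
    intro j
    apply LipschitzWith.of_dist_le_mul
    intro x y
    refine le_trans ?_ (hf.lip.dist_le_mul x y)
    rw [dist_eq_norm, dist_eq_norm]
    exact PiLp.norm_apply_le (f x - f y) j
  set h : E n → E n := fun x => WithLp.toLp 2 fun j =>
    if j = i then η x else max (min (f x j) (m x)) (-m x) with hh
  have hhlip : ∃ K', LipschitzWith K' h := by
    have h1 : ∀ j, LipschitzWith (max 1 K) fun x =>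
        if j = i then η x else max (min (f x j) (m x)) (-m x) := by
      intro j
      by_cases hj : j = i
      · simp only [hj, if_true]
        exact hη.weaken (le_max_right _ _)
      · simp only [hj, if_false]
        have : LipschitzWith (max (max 1 1) 1) fun x => max (min (f x j) (m x)) (-m x) :=
          ((hcomp j).min hmlip).max hmlip.neg
        exact this.weaken (by simp)
    have h2 : LipschitzWith (max 1 K) fun x => fun j =>
        if j = i then η x else max (min (f x j) (m x)) (-m x) := by
      intro x y
      exact (edist_pi_le_iff.2 fun j => h1 j x y)
    exact ⟨_, (PiLp.lipschitzWith_toLp 2 _).comp h2⟩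
  obtain ⟨K', hK'⟩ := hhlip
  have hhsupp : ∀ x, a ≤ ‖x‖ → h x = 0 := by
    intro x hx
    have h0 : m x = 0 := by simp [hm, hx]
    have h1 : η x = 0 := hsupp x (haR.trans hx)
    ext j
    simp [hh, h0, h1]
  have hint := integral_det_eq_zero hn hK' hhsupp
  refine ⟨a, haR, ?_⟩
  have hdet : ∀ᵐ x, (fderiv ℝ h x).det = c * ∑ j, fderiv ℝ η x (EuclideanSpace.single j 1) *
        fderiv ℝ f x (EuclideanSpace.single j 1) i := by
    filter_upwards [hf.ae, hK'.ae_differentiableAt, hη.ae_differentiableAt] with x hx hhx hηx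
    have hrow : ∀ j v, fderiv ℝ h x v j = fderiv ℝ (fun y => h y j) x v := by
      intro j v
      have : HasFDerivAt (fun y => h y j)
          ((EuclideanSpace.proj j : E n →L[ℝ] ℝ).comp (fderiv ℝ h x)) x :=
        (EuclideanSpace.proj j : E n →L[ℝ] ℝ).hasFDerivAt.comp x hhx.hasFDerivAt
      rw [this.fderiv]
      rfl
    have hrowf : ∀ j v, fderiv ℝ f x v j = fderiv ℝ (fun y => f y j) x v := by
      intro j v
      have : HasFDerivAt (fun y => f y j)
          ((EuclideanSpace.proj j : E n →L[ℝ] ℝ).comp (fderiv ℝ f x)) x :=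
        (EuclideanSpace.proj j : E n →L[ℝ] ℝ).hasFDerivAt.comp x hx.1.hasFDerivAt
      rw [this.fderiv]
      rfl
    have hrowi : ∀ v, fderiv ℝ h x v i = fderiv ℝ η x v := by
      intro v
      rw [hrow]
      congr 2
      ext y
      simp [hh]
    rw [det_eq_matE]
    by_cases hxR : ‖x‖ < R + 1
    · have hmat : matE (fderiv ℝ h x) = (matE (fderiv ℝ f x)).updateRow i
          (fun j => fderiv ℝ η x (EuclideanSpace.single j 1)) := by
        ext j k
        by_cases hj : j = i
        · subst hj
          simp [matE, hrowi]
        · rw [Matrix.updateRow_ne hj]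
          simp only [matE, Matrix.of_apply, hrow, hrowf]
          congr 1
          apply Filter.EventuallyEq.fderiv_eq
          have : ∀ᶠ y in nhds x, ‖y‖ < R + 1 :=
            continuous_norm.continuousAt.eventually_lt continuousAt_const hxR
          filter_upwards [this] with y hy
          have hfy : |f y j| ≤ m y := by
            have h1 : |f y j| ≤ ‖f y‖ := PiLp.norm_apply_le (f y) j
            have h2 : ‖f y‖ ≤ ‖f 0‖ + ‖y‖ := by
              have := hf.lip.norm_sub_le y 0
              have h3 := norm_sub_norm_le (f y) (f 0)
              simp at this
              linarith
            have h3 : a - ‖y‖ ≤ m y := le_max_right _ _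
            linarith
          rw [abs_le] at hfy
          simp [hh, hj, min_eq_left hfy.2, max_eq_left hfy.1]
      rw [hmat, det_updateRow_ortho hx.2.1 hx.2.2]
      rfl
    · have hz : fderiv ℝ η x = 0 := by
        have : η =ᶠ[nhds x] fun _ => 0 := by
          have : ∀ᶠ y in nhds x, R < ‖y‖ :=
            continuousAt_const.eventually_lt continuous_norm.continuousAt (by linarith)
          filter_upwards [this] with y hy using hsupp y hy.le
        rw [this.fderiv_eq]
        simp
      rw [Matrix.det_eq_zero_of_row_eq_zero i]
      · simp [hz]
      · intro k
        simp [matE, hrowi, hz]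
  rw [integral_congr_ae (ae_restrict_of_ae hdet), integral_const_mul] at hint
  exact (mul_eq_zero.1 hint).resolve_left hc

lemma lip_sq {X : Type*} [PseudoMetricSpace X] {φ : X → ℝ} {K : NNReal} (hφ : LipschitzWith K φ)
    (h0 : ∀ x, 0 ≤ φ x) (h1 : ∀ x, φ x ≤ 1) : LipschitzWith (2 * K) fun x => φ x ^ 2 := by
  apply LipschitzWith.of_dist_le_mul
  intro x y
  have h := hφ.dist_le_mul x y
  rw [Real.dist_eq] at h ⊢
  have e : φ x ^ 2 - φ y ^ 2 = (φ x + φ y) * (φ x - φ y) := by ring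
  rw [e, abs_mul, abs_of_nonneg (add_nonneg (h0 x) (h0 y))]
  push_cast
  have := abs_nonneg (φ x - φ y)
  nlinarith [h1 x, h1 y]

/-- The radial kernel. -/
def kE {n : ℕ} (z : E n) : ℝ := 1 - (min ‖z‖ 1) ^ 2

lemma kE_lip {n : ℕ} : LipschitzWith 2 (kE : E n → ℝ) := by
  have h1 : LipschitzWith (max 1 0) fun z : E n => min ‖z‖ 1 :=
    lipschitzWith_one_norm.min (LipschitzWith.const (1:ℝ))
  have h2 := lip_sq h1 (fun z => le_min (norm_nonneg z) zero_le_one) (fun z => min_le_right _ _)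
  have h3 := (LipschitzWith.const (α := E n) (1:ℝ)).sub h2
  have : (0 + 2 * max 1 0 : NNReal) = 2 := by simp
  rw [this] at h3
  exact h3

lemma kE_nonneg {n : ℕ} (z : E n) : 0 ≤ kE z := by
  have h1 : 0 ≤ min ‖z‖ 1 := le_min (norm_nonneg z) zero_le_one
  have h2 : min ‖z‖ 1 ≤ 1 := min_le_right _ _
  unfold kE
  nlinarith

lemma kE_le {n : ℕ} (z : E n) : kE z ≤ 1 := by
  unfold kE
  nlinarith [sq_nonneg (min ‖z‖ 1)]

lemma kE_zero {n : ℕ} (z : E n) (hz : 1 ≤ ‖z‖) : kE z = 0 := by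
  simp [kE, min_eq_right hz]

lemma kE_supp {n : ℕ} : HasCompactSupport (kE : E n → ℝ) := by
  apply HasCompactSupport.intro (isCompact_closedBall 0 1)
  intro x hx
  apply kE_zero
  simp at hx
  exact hx.le

lemma kE_int_pos {n : ℕ} : 0 < ∫ z : E n, kE z := by
  apply kE_lip.continuous.integral_pos_of_hasCompactSupport_nonneg_nonzero kE_supp
    (fun z => kE_nonneg z) (x := 0)
  simp [kE]

lemma kE_sq_fderiv {n : ℕ} (x : E n) (hx : ‖x‖ ≠ 1) (v : E n) :
    fderiv ℝ (fun z : E n => kE z ^ 2) x v = -4 * kE x * inner ℝ x v := by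
  rcases lt_or_gt_of_ne hx with h | h
  · have he : (fun z : E n => kE z ^ 2) =ᶠ[nhds x] fun z => (1 - ‖z‖ ^ 2) ^ 2 := by
      have : ∀ᶠ y in nhds x, ‖y‖ < 1 :=
        continuous_norm.continuousAt.eventually_lt continuousAt_const h
      filter_upwards [this] with y hy
      simp [kE, min_eq_left hy.le]
    have hd := ((((hasStrictFDerivAt_norm_sq x).hasFDerivAt).const_sub 1).pow 2)
    rw [he.fderiv_eq, hd.fderiv]
    simp [kE, min_eq_left h.le]
    ring
  · have he : (fun z : E n => kE z ^ 2) =ᶠ[nhds x] fun z => 0 := by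
      have : ∀ᶠ y in nhds x, 1 < ‖y‖ :=
        continuousAt_const.eventually_lt continuous_norm.continuousAt h
      filter_upwards [this] with y hy
      simp [kE_zero y hy.le]
    rw [he.fderiv_eq]
    simp [kE_zero x h.le]

lemma clm_apply_sum {n : ℕ} (T : E n →L[ℝ] E n) (x : E n) (i : Fin n) :
    T x i = ∑ j, x j * T (EuclideanSpace.single j 1) i := by
  have hx : x = ∑ j, x j • EuclideanSpace.single j (1:ℝ) := by
    ext a
    simp [Pi.single_apply]
  conv_lhs => rw [hx, map_sum]
  simp

lemma mean_zero {n : ℕ} {c : ℝ} (hc : c ≠ 0) {f : E n → E n} (hf : OrthoAE c f) (i : Fin n) :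
    ∫ z, kE z * fderiv ℝ f z z i = 0 := by
  have : Nonempty (Fin n) := ⟨i⟩
  obtain ⟨R', hR', hint⟩ := weak_harmonic hc hf (η := fun z => kE z ^ 2)
    (lip_sq kE_lip kE_nonneg kE_le) zero_le_one (fun x hx => by simp [kE_zero x hx]) i
  have hsph : ∀ᵐ x : E n, ‖x‖ ≠ 1 := by
    have := Measure.addHaar_sphere (volume : Measure (E n)) 0 1
    rw [ae_iff]
    refine measure_mono_null ?_ this
    intro x hx
    simpa using hx
  have hcongr : ∀ᵐ x : E n, ∑ j, fderiv ℝ (fun z : E n => kE z ^ 2) x (EuclideanSpace.single j 1) *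
        fderiv ℝ f x (EuclideanSpace.single j 1) i = -4 * (kE x * fderiv ℝ f x x i) := by
    filter_upwards [hsph] with x hx
    simp only [kE_sq_fderiv x hx]
    rw [clm_apply_sum (fderiv ℝ f x) x i, Finset.mul_sum, Finset.mul_sum]
    refine Finset.sum_congr rfl fun j _ => ?_
    rw [EuclideanSpace.inner_single_right]
    simp
    ring
  rw [integral_congr_ae (ae_restrict_of_ae hcongr), integral_const_mul,
    setIntegral_eq_integral_of_forall_compl_eq_zero] at hint
  · linarith
  · intro x hx
    have : 1 ≤ ‖x‖ := by
      simp at hx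
      linarith
    simp [kE_zero x this]

lemma OrthoAE.rescale {n : ℕ} {c : ℝ} {f : E n → E n} (hf : OrthoAE c f) (y : E n) {R : ℝ}
    (hR : 0 < R) : OrthoAE c (fun z => R⁻¹ • f (y + R • z)) ∧
    ∀ᵐ z, HasFDerivAt f (fderiv ℝ f (y + R • z)) (y + R • z) ∧
      fderiv ℝ (fun z => R⁻¹ • f (y + R • z)) z = fderiv ℝ f (y + R • z) := by
  have h1 := ae_comp_of_lip hf.ae (T := fun z => y + R • z) (T' := fun z => R⁻¹ • (z - y))
    (K := ‖R⁻¹‖₊ * (1 + 0))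
    ((lipschitzWith_smul R⁻¹).comp (LipschitzWith.id.sub (LipschitzWith.const y)))
    (by intro z; simp [smul_smul, hR.ne'])
  have h2 : ∀ᵐ z, HasFDerivAt f (fderiv ℝ f (y + R • z)) (y + R • z) ∧
      fderiv ℝ (fun z => R⁻¹ • f (y + R • z)) z = fderiv ℝ f (y + R • z) ∧
      DifferentiableAt ℝ (fun z => R⁻¹ • f (y + R • z)) z := by
    filter_upwards [h1] with z hz
    have hd := hz.1.hasFDerivAt
    have ha : HasFDerivAt (fun z : E n => y + R • z) (R • ContinuousLinearMap.id ℝ (E n)) z :=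
      ((hasFDerivAt_id z).const_smul R).const_add y
    have hb := (hd.comp z ha).const_smul R⁻¹
    refine ⟨hd, ?_, hb.differentiableAt⟩
    have := hb.fderiv
    change fderiv ℝ (fun z => R⁻¹ • f (y + R • z)) z = _ at this
    rw [this]
    ext v
    simp [smul_smul, hR.ne']
  refine ⟨⟨?_, ?_⟩, h2.mono fun z hz => ⟨hz.1, hz.2.1⟩⟩
  · apply LipschitzWith.of_dist_le_mul
    intro a b
    have := hf.lip.dist_le_mul (y + R • a) (y + R • b)
    rw [dist_add_left, dist_smul₀] at this
    rw [dist_smul₀]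
    simp [abs_of_pos hR] at this ⊢
    rw [inv_mul_le_iff₀ hR]
    exact this
  · filter_upwards [h1, h2] with z hz hz2
    rw [hz2.2.1]
    exact ⟨hz2.2.2, hz.2⟩

lemma OrthoAE.comp_lip {n : ℕ} {c : ℝ} {f : E n → E n} (hf : OrthoAE c f) (i : Fin n)
    (x y : E n) : |f x i - f y i| ≤ ‖x - y‖ := by
  have h1 := hf.lip.dist_le_mul x y
  rw [dist_eq_norm, dist_eq_norm, NNReal.coe_one, one_mul] at h1
  exact (PiLp.norm_apply_le (f x - f y) i).trans h1

lemma mean_value {n : ℕ} {c : ℝ} (hc : c ≠ 0) {f : E n → E n} (hf : OrthoAE c f) (i : Fin n)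
    (y : E n) {R : ℝ} (hR : 0 < R) :
    ∫ z, kE z * f (y + R • z) i = f y i * ∫ z : E n, kE z := by
  have hfc : Continuous f := hf.lip.continuous
  have hkc : Continuous (kE : E n → ℝ) := kE_lip.continuous
  have hFint : ∀ r : ℝ, Integrable fun z => kE z * f (y + r • z) i := by
    intro r
    apply Continuous.integrable_of_hasCompactSupport
    · fun_prop
    · exact kE_supp.mul_right
  have hbint : Integrable fun z : E n => kE z * ‖z‖ := by
    apply Continuous.integrable_of_hasCompactSupport
    · fun_prop
    · exact kE_supp.mul_right
  set M : ℝ → ℝ := fun r => ∫ z, kE z * f (y + r • z) i with hM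
  have hpt : ∀ r s : ℝ, ∀ z, |kE z * f (y + r • z) i - kE z * f (y + s • z) i| ≤
      kE z * ‖z‖ * |r - s| := by
    intro r s z
    rw [← mul_sub, abs_mul, abs_of_nonneg (kE_nonneg z), mul_assoc]
    have h1 := hf.comp_lip i (y + r • z) (y + s • z)
    rw [add_sub_add_left_eq_sub, ← sub_smul, norm_smul, Real.norm_eq_abs] at h1
    have := kE_nonneg z
    rw [mul_comm ‖z‖]
    gcongr
  have hder : ∀ r > 0, HasDerivAt M 0 r := by
    intro r hr
    obtain ⟨h1, h2⟩ := hf.rescale y hr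
    have h3 := mean_zero hc h1 i
    have h4 : ∫ z, kE z * fderiv ℝ f (y + r • z) z i = 0 := by
      rw [← h3]
      apply integral_congr_ae
      filter_upwards [h2] with z hz
      rw [hz.2]
    rw [← h4]
    refine (hasDerivAt_integral_of_dominated_loc_of_lip (bound := fun z => kE z * ‖z‖)
      (s := Set.univ) Filter.univ_mem (Filter.Eventually.of_forall fun r => (hFint r).1) (hFint r)
      ?_ ?_ hbint ?_).2
    · apply Measurable.aestronglyMeasurable
      apply hkc.measurable.mul
      have ha : Measurable fun z => fderiv ℝ f (y + r • z) :=
        (measurable_fderiv ℝ f).comp (by fun_prop : Measurable fun z : E n => y + r • z)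
      have hb : Measurable fun z => fderiv ℝ f (y + r • z) z :=
        (by fun_prop : Continuous fun p : (E n →L[ℝ] E n) × E n => p.1 p.2).measurable.comp
          (ha.prodMk measurable_id)
      exact (EuclideanSpace.proj i : E n →L[ℝ] ℝ).continuous.measurable.comp hb
    · refine Filter.Eventually.of_forall fun z => ?_
      apply LipschitzWith.lipschitzOnWith
      apply LipschitzWith.of_dist_le_mul
      intro a b
      rw [Real.dist_eq, Real.dist_eq]
      refine (hpt a b z).trans ?_
      rw [Real.coe_nnabs]
      gcongr
      exact le_abs_self _
    · filter_upwards [h2] with z hz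
      have hl : HasDerivAt (fun t : ℝ => y + t • z) z r := by
        simpa using ((hasDerivAt_id r).smul_const z).const_add y
      have hm := hz.1.comp_hasDerivAt r hl
      have hp := ((EuclideanSpace.proj i : E n →L[ℝ] ℝ).hasFDerivAt.comp_hasDerivAt r hm)
      exact hp.const_mul (kE z)
  have hcont : Continuous M := by
    have : LipschitzWith (Real.nnabs (∫ z : E n, kE z * ‖z‖)) M := by
      apply LipschitzWith.of_dist_le_mul
      intro a b
      rw [Real.dist_eq, Real.dist_eq, hM]
      simp only
      rw [← integral_sub (hFint a) (hFint b), Real.coe_nnabs]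
      calc _ ≤ ∫ z, |kE z * f (y + a • z) i - kE z * f (y + b • z) i| :=
            abs_integral_le_integral_abs
        _ ≤ ∫ z : E n, kE z * ‖z‖ * |a - b| :=
            integral_mono ((hFint a).sub (hFint b)).abs (hbint.mul_const _) (hpt a b)
        _ = (∫ z : E n, kE z * ‖z‖) * |a - b| := integral_mul_const _ _
        _ ≤ _ := by gcongr; exact le_abs_self _
    exact this.continuous
  obtain ⟨t, ht, hslope⟩ := exists_hasDerivAt_eq_slope M (fun _ => 0) hR hcont.continuousOn
    (fun x hx => hder x hx.1)
  have : M R = M 0 := by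
    rw [eq_comm, div_eq_zero_iff] at hslope
    rcases hslope with h | h <;> linarith
  calc M R = M 0 := this
    _ = _ := by
      simp only [hM, zero_smul, add_zero]
      rw [integral_mul_const]
      ring

lemma second_diff {n : ℕ} {c : ℝ} (hc : c ≠ 0) {f : E n → E n} (hf : OrthoAE c f) (i : Fin n)
    (y h h' : E n) : f (y + h' + h) i - f (y + h') i = f (y + h) i - f y i := by
  have hfc : Continuous f := hf.lip.continuous
  have hkc : Continuous (kE : E n → ℝ) := kE_lip.continuous
  set w : E n → ℝ := fun x => f (x + h) i - f x i with hw
  have hwb : ∀ x, |w x| ≤ ‖h‖ := by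
    intro x
    have := hf.comp_lip i (x + h) x
    simpa using this
  have hwc : Continuous w := by fun_prop
  have hint : ∀ x : E n, ∀ R : ℝ, Integrable fun z => kE z * f (x + R • z) i := by
    intro x R
    apply Continuous.integrable_of_hasCompactSupport
    · fun_prop
    · exact kE_supp.mul_right
  have hintw : ∀ x : E n, ∀ R : ℝ, Integrable fun z => kE z * w (x + R • z) := by
    intro x R
    apply Continuous.integrable_of_hasCompactSupport
    · fun_prop
    · exact kE_supp.mul_right
  set κ := ∫ z : E n, kE z with hκ
  have hκpos : 0 < κ := kE_int_pos
  have hmv : ∀ x : E n, ∀ R : ℝ, 0 < R → ∫ z, kE z * w (x + R • z) = w x * κ := by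
    intro x R hR
    have h1 := mean_value hc hf i (x + h) hR
    have h2 := mean_value hc hf i x hR
    simp only [hw]
    rw [sub_mul, ← h1, ← h2, ← integral_sub (hint _ _) (hint _ _)]
    refine integral_congr_ae (Filter.Eventually.of_forall fun z => ?_)
    simp only
    rw [add_right_comm x h]
    ring
  set V := volume.real (Metric.closedBall (0 : E n) 2) with hV
  have key : ∀ R : ℝ, 0 < R → ‖h'‖ ≤ R → |w (y + h') - w y| * κ ≤ 2 * (‖h'‖ / R) * ‖h‖ * V := by
    intro R hR hRh
    have h1 := hmv (y + h') R hR
    have h2 := hmv y R hR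
    have h3 : ∫ z, kE z * w (y + h' + R • z) = ∫ z, kE (z - R⁻¹ • h') * w (y + R • z) := by
      rw [← integral_add_right_eq_self (fun z => kE (z - R⁻¹ • h') * w (y + R • z)) (R⁻¹ • h')]
      refine integral_congr_ae (Filter.Eventually.of_forall fun z => ?_)
      simp only [add_sub_cancel_right, smul_add, smul_smul, mul_inv_cancel₀ hR.ne', one_smul]
      congr 2
      abel
    have hnorm : ‖R⁻¹ • h'‖ = ‖h'‖ / R := by
      rw [norm_smul, Real.norm_eq_abs, abs_of_pos (inv_pos.2 hR)]; ring
    have hle1 : ‖h'‖ / R ≤ 1 := by rw [div_le_one hR]; exact hRh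
    have hi : Integrable fun z => kE (z - R⁻¹ • h') * w (y + R • z) := by
      have := (hintw (y + h') R).comp_sub_right (R⁻¹ • h')
      refine this.congr (Filter.Eventually.of_forall fun z => ?_)
      simp only [smul_sub, smul_smul, mul_inv_cancel₀ hR.ne', one_smul]
      congr 2
      abel
    have h4 : (w (y + h') - w y) * κ =
        ∫ z in Metric.closedBall (0 : E n) 2, (kE (z - R⁻¹ • h') - kE z) * w (y + R • z) := by
      rw [setIntegral_eq_integral_of_forall_compl_eq_zero]
      · rw [sub_mul, ← h1, ← h2, h3, ← integral_sub hi (hintw _ _)]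
        simp only [sub_mul]
      · intro z hz
        have hz' : 2 < ‖z‖ := by simpa using hz
        have h5 : 1 ≤ ‖z - R⁻¹ • h'‖ := by
          have := norm_sub_norm_le z (R⁻¹ • h')
          linarith
        rw [kE_zero _ h5, kE_zero z (by linarith)]
        simp
    have h5 : ‖∫ z in Metric.closedBall (0 : E n) 2, (kE (z - R⁻¹ • h') - kE z) * w (y + R • z)‖ ≤
        (2 * (‖h'‖ / R) * ‖h‖) * V := by
      apply norm_setIntegral_le_of_norm_le_const
      · exact measure_closedBall_lt_top
      · intro z _
        rw [norm_mul]
        have h6 := kE_lip.dist_le_mul (z - R⁻¹ • h') z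
        rw [dist_eq_norm, dist_eq_norm] at h6
        have h7 : z - R⁻¹ • h' - z = -(R⁻¹ • h') := by abel
        rw [h7, norm_neg, hnorm] at h6
        have h8 := hwb (y + R • z)
        have h9 : ((2 : NNReal) : ℝ) = 2 := rfl
        rw [h9] at h6
        rw [← Real.norm_eq_abs] at h8
        gcongr
    rw [← h4, norm_mul, Real.norm_eq_abs, Real.norm_eq_abs, abs_of_pos hκpos] at h5
    exact h5
  have hlim : Filter.Tendsto (fun R : ℝ => 2 * (‖h'‖ / R) * ‖h‖ * V) Filter.atTop
      (nhds (2 * 0 * ‖h‖ * V)) :=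
    (((tendsto_const_nhds.div_atTop Filter.tendsto_id).const_mul 2).mul_const _).mul_const _
  have hfin : |w (y + h') - w y| * κ ≤ 2 * 0 * ‖h‖ * V := by
    apply ge_of_tendsto hlim
    filter_upwards [Filter.eventually_gt_atTop 0, Filter.eventually_ge_atTop ‖h'‖] with R h1 h2
    exact key R h1 h2
  have h0 : |w (y + h') - w y| = 0 := by
    have := abs_nonneg (w (y + h') - w y)
    nlinarith
  have := abs_eq_zero.1 h0
  simp only [hw] at this
  linarith

lemma ortho_affine {n : ℕ} {c : ℝ} (hc : c ≠ 0) {f : E n → E n} (hf : OrthoAE c f) :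
    ∃ L : E n →L[ℝ] E n, ∀ x, f x = f 0 + L x := by
  have hadd : ∀ x y, f (x + y) - f 0 = (f x - f 0) + (f y - f 0) := by
    intro x y
    ext i
    have := second_diff hc hf i 0 y x
    simp only [zero_add] at this
    simp
    linarith
  let φ : E n →+ E n :=
    { toFun := fun x => f x - f 0
      map_zero' := by simp
      map_add' := hadd }
  have hφ : Continuous φ := hf.lip.continuous.sub continuous_const
  refine ⟨φ.toRealLinearMap hφ, fun x => ?_⟩
  have : φ.toRealLinearMap hφ x = f x - f 0 := rfl
  rw [this]
  abel

/-- The continuous linear map of a matrix. -/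
def toL {n : ℕ} (A : Matrix (Fin n) (Fin n) ℝ) : E n →L[ℝ] E n :=
  LinearMap.toContinuousLinearMap
    { toFun := fun x => mulVecE A x
      map_add' := by intro x y; ext i; simp [mulVecE, Matrix.mulVec_add]
      map_smul' := by intro r x; ext i; simp [mulVecE, Matrix.mulVec_smul] }

lemma toL_apply {n : ℕ} (A : Matrix (Fin n) (Fin n) ℝ) (x : E n) : toL A x = mulVecE A x := rfl

lemma toL_mul {n : ℕ} (A B : Matrix (Fin n) (Fin n) ℝ) (x : E n) :
    toL A (toL B x) = toL (A * B) x := by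
  ext i
  simp [toL_apply, mulVecE, Matrix.mulVec_mulVec]

lemma toL_one {n : ℕ} (x : E n) : toL (1 : Matrix (Fin n) (Fin n) ℝ) x = x := by
  ext i
  simp [toL_apply, mulVecE]

lemma matE_toL {n : ℕ} (A : Matrix (Fin n) (Fin n) ℝ) : matE (toL A) = A := by
  ext i j
  simp [matE, toL_apply, mulVecE]

lemma toL_matE {n : ℕ} (T : E n →L[ℝ] E n) : toL (matE T) = T := by
  ext x i
  rw [clm_apply_sum T x i]
  simp [toL_apply, mulVecE, matE, Matrix.mulVec, dotProduct, mul_comm]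

lemma norm_le_one_of_ortho {n : ℕ} {A : Matrix (Fin n) (Fin n) ℝ} (h : A * Aᵀ = 1) :
    ‖toL A‖ ≤ 1 := by
  have h' : Aᵀ * A = 1 := mul_eq_one_comm.1 h
  apply ContinuousLinearMap.opNorm_le_bound _ zero_le_one
  intro x
  rw [one_mul]
  apply le_of_eq
  rw [← sq_eq_sq₀ (norm_nonneg _) (norm_nonneg _), EuclideanSpace.real_norm_sq_eq,
    EuclideanSpace.real_norm_sq_eq]
  have e1 : ∑ i, (toL A x) i ^ 2 = (A *ᵥ (x : Fin n → ℝ)) ⬝ᵥ (A *ᵥ (x : Fin n → ℝ)) := by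
    simp [toL_apply, mulVecE, dotProduct, sq]
  have e2 : ∑ i, x i ^ 2 = (x : Fin n → ℝ) ⬝ᵥ (x : Fin n → ℝ) := by
    simp [dotProduct, sq]
  rw [e1, e2, Matrix.dotProduct_mulVec, Matrix.vecMul_mulVec, h', Matrix.vecMul_one]

open scoped MatrixOrder ComplexOrder in
lemma posDef_factor {n : ℕ} {S : Matrix (Fin n) (Fin n) ℝ} (hS : S.PosDef) :
    ∃ Q : Matrix (Fin n) (Fin n) ℝ, S = Q * Qᵀ ∧ IsUnit Q.det := by
  obtain ⟨B, hB⟩ := CStarAlgebra.nonneg_iff_eq_star_mul_self.mp hS.posSemidef.nonneg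
  refine ⟨Bᵀ, ?_, ?_⟩
  · rw [hB, Matrix.transpose_transpose, Matrix.star_eq_conjTranspose,
      Matrix.conjTranspose_eq_transpose_of_trivial]
  · have := hS.det_pos
    rw [hB, Matrix.star_eq_conjTranspose, Matrix.conjTranspose_eq_transpose_of_trivial,
      Matrix.det_mul, Matrix.det_transpose] at this
    rw [Matrix.det_transpose, isUnit_iff_ne_zero]
    intro h0
    rw [h0] at this
    simp at this

/-- **Rigidity step in the proof of Theorem `thm:matzkin`**: if `H` and `S` are symmetric
positive definite and the locally Lipschitz map `g` satisfies, almost everywhere,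
`det Dg(w) > 0` and `Dg(w) H⁻¹ Dg(w)ᵀ = S`, then `g` is affine. -/
theorem ae_congruence_constraint_affine
    (G : ℕ) (hG : 2 ≤ G)
    (H S : Matrix (Fin G) (Fin G) ℝ) (hH : H.PosDef) (hS : S.PosDef)
    (g : E G → E G) (hg : LocallyLipschitz g)
    (hDg : ∀ᵐ w : E G, DifferentiableAt ℝ g w ∧
      ∃ J : Matrix (Fin G) (Fin G) ℝ, (∀ v : E G, fderiv ℝ g w v = mulVecE J v) ∧
        0 < J.det ∧ J * H⁻¹ * Jᵀ = S) :
    ∃ (a : E G) (M : Matrix (Fin G) (Fin G) ℝ), ∀ w : E G, g w = a + mulVecE M w := by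
  obtain ⟨Q, hQ, hQu⟩ := posDef_factor hS
  obtain ⟨D, hD, hDu⟩ := posDef_factor hH.inv
  set d : ℝ := Real.sqrt (S.det * H.det) with hd
  have hd0 : 0 < d := Real.sqrt_pos.2 (mul_pos hS.det_pos hH.det_pos)
  set c : ℝ := Q⁻¹.det * d * D.det with hcdef
  have hQiu : IsUnit Q⁻¹.det := Matrix.isUnit_nonsing_inv_det Q hQu
  have hc : c ≠ 0 := mul_ne_zero (mul_ne_zero hQiu.ne_zero hd0.ne') hDu.ne_zero
  set f : E G → E G := fun z => toL Q⁻¹ (g (toL D z)) with hf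
  have hfl : LocallyLipschitz f :=
    (toL Q⁻¹).lipschitz.locallyLipschitz.comp (hg.comp (toL D).lipschitz.locallyLipschitz)
  have hae : ∀ᵐ x, DifferentiableAt ℝ f x ∧
      (matE (fderiv ℝ f x)) * (matE (fderiv ℝ f x))ᵀ = 1 ∧ (matE (fderiv ℝ f x)).det = c := by
    have h1 := ae_comp_of_lip hDg (T := fun z => toL D z) (T' := fun z => toL D⁻¹ z)
      (toL D⁻¹).lipschitz
      (by intro z; rw [toL_mul, Matrix.nonsing_inv_mul D hDu, toL_one])
    filter_upwards [h1] with x hx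
    obtain ⟨hx1, J, hJ, hJpos, hJS⟩ := hx
    have hJ' : fderiv ℝ g (toL D x) = toL J := by
      ext v : 1
      exact hJ v
    have hder : HasFDerivAt f ((toL Q⁻¹).comp ((toL J).comp (toL D))) x := by
      have h2 := hx1.hasFDerivAt
      rw [hJ'] at h2
      exact (toL Q⁻¹).hasFDerivAt.comp x (h2.comp x (toL D).hasFDerivAt)
    have hA : (toL Q⁻¹).comp ((toL J).comp (toL D)) = toL (Q⁻¹ * J * D) := by
      ext v : 1
      simp only [ContinuousLinearMap.comp_apply, toL_mul, mul_assoc]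
    rw [hA] at hder
    have hdet : J.det = d := by
      have h3 : J.det * H.det⁻¹ * J.det = S.det := by
        rw [← hJS]
        simp [Matrix.det_mul, Matrix.det_nonsing_inv]
      have hHne := hH.det_pos.ne'
      rw [hd, eq_comm, Real.sqrt_eq_iff_mul_self_eq_of_pos hJpos, ← h3]
      field_simp
    refine ⟨hder.differentiableAt, ?_, ?_⟩
    · rw [hder.fderiv, matE_toL]
      calc Q⁻¹ * J * D * (Q⁻¹ * J * D)ᵀ = Q⁻¹ * (J * (D * Dᵀ) * Jᵀ) * Q⁻¹ᵀ := by
            simp only [Matrix.transpose_mul, mul_assoc]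
        _ = (Q⁻¹ * Q) * (Qᵀ * Q⁻¹ᵀ) := by
            rw [← hD, hJS, hQ]; simp only [mul_assoc]
        _ = 1 := by
            rw [← Matrix.transpose_mul, Matrix.nonsing_inv_mul Q hQu]; simp
    · rw [hder.fderiv, matE_toL, Matrix.det_mul, Matrix.det_mul, hdet]
  have hO : OrthoAE c f := by
    refine ⟨lip_of_ae hfl ?_, hae⟩
    filter_upwards [hae] with x hx
    refine ⟨hx.1, ?_⟩
    have := norm_le_one_of_ortho hx.2.1
    rwa [toL_matE] at this
  obtain ⟨L, hL⟩ := ortho_affine hc hO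
  refine ⟨toL Q (f 0), Q * matE L * D⁻¹, fun w => ?_⟩
  have h1 := hL (toL D⁻¹ w)
  have h2 : toL Q (f (toL D⁻¹ w)) = g w := by
    simp only [hf]
    rw [toL_mul, toL_mul, Matrix.mul_nonsing_inv Q hQu, Matrix.mul_nonsing_inv D hDu, toL_one,
      toL_one]
  rw [← h2, h1, map_add, ← toL_apply, ← toL_mul, ← toL_mul, toL_matE]
end
end
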